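/- Let G be a Grothendieck abelian category and (A, B) a complete hereditary cotorsion pair in G. Then both induced pairs in the category Ch(G) of cochain complexes are complete cotorsion pairs. Explicitly: (i) every cochain complex X over G admits short exact sequences of complexes 0 → X → B_X → P_X → 0 and 0 → B^X → P^X → X → 0 with B_X, B^X ∈ B̃ and Ext¹_{Ch(G)}(P_X, V) = 0 = Ext¹_{Ch(G)}(P^X, V) for every V ∈ B̃; and (ii) every cochain complex X over G admits short exact sequences of complexes 0 → X → F_X → A_X → 0 and 0 → F^X → A^X → X → 0 with A_X, A^X ∈ Ã and Ext¹_{Ch(G)}(U, F_X) = 0 = Ext¹_{Ch(G)}(U, F^X) for every U ∈ Ã. -/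

import Mathlib

open CategoryTheory CategoryTheory.Limits

universe w v u

variable {𝒢 : Type u} [Category.{v} 𝒢] [Abelian 𝒢]

/-- `Ext¹(A, B) = 0`, phrased as: every short exact sequence `0 → B → E → A → 0`
splits. -/
def Ext1Zero {C : Type*} [Category C] [Abelian C] (A B : C) : Prop :=
  ∀ (E : C) (i : B ⟶ E) (p : E ⟶ A) (w : i ≫ p = 0),
    (ShortComplex.mk i p w).ShortExact → ∃ s : A ⟶ E, s ≫ p = 𝟙 A

/-- The right `Ext¹`-orthogonal class `S^⊥` of a class of objects `S`. -/
def rightPerp {C : Type*} [Category C] [Abelian C] (S : Set C) : Set C :=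
  {B | ∀ A ∈ S, Ext1Zero A B}

/-- The left `Ext¹`-orthogonal class `⊥S` of a class of objects `S`. -/
def leftPerp {C : Type*} [Category C] [Abelian C] (S : Set C) : Set C :=
  {A | ∀ B ∈ S, Ext1Zero A B}

/-- `(𝓐, 𝓑)` is a cotorsion pair: `𝓐 = ⊥𝓑` and `𝓑 = 𝓐^⊥`. -/
structure IsCotorsionPair {C : Type*} [Category C] [Abelian C] (𝓐 𝓑 : Set C) : Prop where
  left_eq : 𝓐 = leftPerp 𝓑
  right_eq : 𝓑 = rightPerp 𝓐

/-- `(𝓐, 𝓑)` is a complete cotorsion pair: a cotorsion pair admitting approximation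
sequences `0 → X → B_X → A_X → 0` and `0 → B^X → A^X → X → 0` for every object `X`. -/
structure IsCompleteCotorsionPair {C : Type*} [Category C] [Abelian C] (𝓐 𝓑 : Set C)
    extends IsCotorsionPair 𝓐 𝓑 : Prop where
  approx₁ : ∀ X : C, ∃ (B A : C) (i : X ⟶ B) (p : B ⟶ A) (w : i ≫ p = 0),
    (ShortComplex.mk i p w).ShortExact ∧ B ∈ 𝓑 ∧ A ∈ 𝓐
  approx₂ : ∀ X : C, ∃ (B A : C) (i : B ⟶ A) (p : A ⟶ X) (w : i ≫ p = 0),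
    (ShortComplex.mk i p w).ShortExact ∧ B ∈ 𝓑 ∧ A ∈ 𝓐

/-- `(𝓐, 𝓑)` is a hereditary pair: `Extⁿ(A, B) = 0` for all `A ∈ 𝓐`, `B ∈ 𝓑`, `n ≥ 1`. -/
def IsHereditary {C : Type u} [Category.{v} C] [Abelian C] [HasExt.{w} C]
    (𝓐 𝓑 : Set C) : Prop :=
  ∀ A ∈ 𝓐, ∀ B ∈ 𝓑, ∀ n : ℕ, 1 ≤ n → Subsingleton (Abelian.Ext A B n)

/-- The class `Ã` of acyclic cochain complexes all of whose components and cycle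
objects `Zⁿ(X) = ker(Xⁿ → X^{n+1})` lie in `𝓐`. -/
def Tilde (𝓐 : Set 𝒢) : Set (CochainComplex 𝒢 ℤ) :=
  {X | (∀ n : ℤ, X.ExactAt n) ∧ (∀ n : ℤ, X.X n ∈ 𝓐) ∧ (∀ n : ℤ, X.cycles n ∈ 𝓐)}

/-!
Orthogonality of `Ã` and `B̃` and two approximations give all four sequences by pullbacks and
pushouts. Every complex embeds in an acyclic one with cokernel in `⊥B̃`: kill the maps from the
spheres on an `𝓐`-cover of the separator. Every acyclic complex embeds in a complex of `B̃` with
cokernel in `Ã`: heredity makes the special `𝓑`-approximations of its cycles splice, by a horseshoe.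

For `Ã^⊥` one moreover embeds a complex in some `I` with acyclic cokernel such that `Ext¹(E, I) = 0`
for all acyclic `E`. There is a single complex `G` such that for each epimorphism `M ⟶ E` onto a
nonzero acyclic complex some composite `G ⟶ M ⟶ E` has nonzero acyclic image `Y`. If `I` is
injective relative to the subcomplexes of `G` with acyclic cokernel, then for an extension `M` of
`E` by `I` the inclusion `Y ⟶ E` lifts to `M`, and Zorn's lemma, applied to the acyclic subcomplexes
of `M` that inject into `E`, turns these partial sections into a splitting.
-/

/-! ### Short exact sequences -/

section ShortExact

variable {C : Type*} [Category C] [Abelian C]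

/-- The composable morphisms `i` and `p` form a short exact sequence `0 → A → B → D → 0`. Bundling
the equation `i ≫ p = 0` into the predicate lets it speak about two bare morphisms. -/
def IsShortExact {A B D : C} (i : A ⟶ B) (p : B ⟶ D) : Prop :=
  ∃ w : i ≫ p = 0, (ShortComplex.mk i p w).ShortExact

namespace IsShortExact

variable {A B D : C} {i : A ⟶ B} {p : B ⟶ D}

lemma comp_eq_zero (h : IsShortExact i p) : i ≫ p = 0 := h.choose

lemma shortExact (h : IsShortExact i p) :
    (ShortComplex.mk i p h.comp_eq_zero).ShortExact := h.choose_spec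

lemma mono (h : IsShortExact i p) : Mono i := h.shortExact.mono_f

lemma epi (h : IsShortExact i p) : Epi p := h.shortExact.epi_g

lemma exists_lift (h : IsShortExact i p) {T : C} (k : T ⟶ B) (hk : k ≫ p = 0) :
    ∃ l : T ⟶ A, l ≫ i = k := by
  have := h.mono
  exact ⟨_, h.shortExact.exact.lift_f k hk⟩

lemma exists_desc (h : IsShortExact i p) {T : C} (k : B ⟶ T) (hk : i ≫ k = 0) :
    ∃ l : D ⟶ T, p ≫ l = k := by
  have := h.epi
  exact ⟨_, h.shortExact.exact.g_desc k hk⟩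

lemma of_exists_lift [Mono i] [Epi p] (w : i ≫ p = 0)
    (h : ∀ {T : C} (k : T ⟶ B), k ≫ p = 0 → ∃ l : T ⟶ A, l ≫ i = k) : IsShortExact i p :=
  ⟨w, { exact := ShortComplex.exact_of_f_is_kernel _ <|
          KernelFork.IsLimit.ofι' i w fun k hk => ⟨(h k hk).choose, (h k hk).choose_spec⟩
        mono_f := ‹_›
        epi_g := ‹_› }⟩

lemma of_exists_desc [Mono i] [Epi p] (w : i ≫ p = 0)
    (h : ∀ {T : C} (k : B ⟶ T), i ≫ k = 0 → ∃ l : D ⟶ T, p ≫ l = k) : IsShortExact i p :=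
  ⟨w, { exact := ShortComplex.exact_of_g_is_cokernel _ <|
          CokernelCofork.IsColimit.ofπ' p w fun k hk => ⟨(h k hk).choose, (h k hk).choose_spec⟩
        mono_f := ‹_›
        epi_g := ‹_› }⟩

protected lemma op (h : IsShortExact i p) : IsShortExact p.op i.op :=
  ⟨by rw [← op_comp, h.comp_eq_zero, op_zero], h.shortExact.op⟩

protected lemma unop {A B D : Cᵒᵖ} {i : A ⟶ B} {p : B ⟶ D} (h : IsShortExact i p) :
    IsShortExact p.unop i.unop :=
  ⟨by rw [← unop_comp, h.comp_eq_zero, unop_zero], h.shortExact.unop⟩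

lemma cokernel_π (i : A ⟶ B) [Mono i] : IsShortExact i (cokernel.π i) :=
  of_exists_desc (cokernel.condition i) fun k hk => ⟨cokernel.desc i k hk, cokernel.π_desc i k hk⟩

lemma kernel_ι (p : B ⟶ D) [Epi p] : IsShortExact (kernel.ι p) p :=
  of_exists_lift (kernel.condition p) fun k hk => ⟨kernel.lift p k hk, kernel.lift_ι p k hk⟩

open ZeroObject in
lemma zero_left (X : C) : IsShortExact (0 : (0 : C) ⟶ X) (𝟙 X) :=
  of_exists_desc zero_comp fun k _ => ⟨k, Category.id_comp k⟩

open ZeroObject in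
lemma zero_right (X : C) : IsShortExact (𝟙 X) (0 : X ⟶ (0 : C)) :=
  of_exists_lift comp_zero fun k _ => ⟨k, Category.comp_id k⟩

section Squares

variable {P X Y Z : C}

lemma of_isPullback {fst : P ⟶ X} {snd : P ⟶ Y} {g : X ⟶ Z} {q : Y ⟶ Z}
    (sq : IsPullback fst snd g q) {n : A ⟶ X} (h : IsShortExact n g) :
    ∃ n' : A ⟶ P, n' ≫ fst = n ∧ IsShortExact n' snd := by
  have := h.mono
  have := h.epi
  let n' : A ⟶ P := sq.lift n 0 (by rw [h.comp_eq_zero, zero_comp])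
  have hn' : n' ≫ fst = n := sq.lift_fst _ _ _
  have hzero : n' ≫ snd = 0 := sq.lift_snd _ _ _
  have : Mono n' := mono_of_mono_fac hn'
  have : Epi snd := Abelian.epi_snd_of_isLimit _ _ sq.isLimit
  refine ⟨n', hn', of_exists_lift hzero fun k hk => ?_⟩
  obtain ⟨l, hl⟩ := h.exists_lift (k ≫ fst)
    (by rw [Category.assoc, sq.w, reassoc_of% hk, zero_comp])
  exact ⟨l, sq.hom_ext (by rw [Category.assoc, hn', hl])
    (by rw [Category.assoc, hzero, hk, comp_zero])⟩

lemma of_isPushout {f : Z ⟶ X} {g : Z ⟶ Y} {inl : X ⟶ P} {inr : Y ⟶ P}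
    (sq : IsPushout f g inl inr) {x : X ⟶ D} (h : IsShortExact f x) :
    ∃ x' : P ⟶ D, inl ≫ x' = x ∧ IsShortExact inr x' := by
  obtain ⟨x', hx', hs⟩ := of_isPullback sq.op.flip h.op
  exact ⟨x'.unop, Quiver.Hom.op_inj hx', hs.unop⟩

lemma comp_of_isPullback {fst : P ⟶ X} {snd : P ⟶ Y} {g : X ⟶ Z} {q : Y ⟶ Z}
    (sq : IsPullback fst snd g q) [Epi q] {e : Z ⟶ D} (h : IsShortExact g e) :
    IsShortExact snd (q ≫ e) := by
  have := h.mono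
  have := h.epi
  have : Mono snd := (MorphismProperty.monomorphisms C).of_isPullback sq ‹Mono g›
  refine of_exists_lift (by rw [← sq.w_assoc, h.comp_eq_zero, comp_zero]) fun k hk => ?_
  obtain ⟨l, hl⟩ := h.exists_lift (k ≫ q) (by rw [Category.assoc, hk])
  exact ⟨sq.lift l k hl, sq.lift_snd _ _ _⟩

end Squares

lemma exists_pullback {X I E : C} {x : X ⟶ I} {e : I ⟶ E} {b : B ⟶ A} {a : A ⟶ E}
    (h₁ : IsShortExact x e) (h₂ : IsShortExact b a) :
    ∃ (F : C) (x' : X ⟶ F) (a' : F ⟶ A) (b' : B ⟶ F) (e' : F ⟶ I),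
      IsShortExact x' a' ∧ IsShortExact b' e' := by
  have sq := IsPullback.of_hasPullback e a
  obtain ⟨x', -, hx'⟩ := of_isPullback sq h₁
  obtain ⟨b', -, hb'⟩ := of_isPullback sq.flip h₂
  exact ⟨_, x', _, b', _, hx', hb'⟩

lemma exists_pushout {K P X : C} {k : K ⟶ P} {x : P ⟶ X} {b : K ⟶ B} {a : B ⟶ A}
    (h₁ : IsShortExact k x) (h₂ : IsShortExact b a) :
    ∃ (P' : C) (b' : B ⟶ P') (x' : P' ⟶ X) (p' : P ⟶ P') (a' : P' ⟶ A),
      IsShortExact b' x' ∧ IsShortExact p' a' := by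
  obtain ⟨P', b', x', p', a', hb, hp⟩ := exists_pullback h₁.op h₂.op
  exact ⟨P'.unop, x'.unop, b'.unop, a'.unop, p'.unop, hb.unop, hp.unop⟩

lemma exists_comp_epi {I E X : C} {i : I ⟶ E} {p : E ⟶ X} {b : B ⟶ A} {a : A ⟶ E}
    (h₁ : IsShortExact i p) (h₂ : IsShortExact b a) :
    ∃ (F : C) (f : F ⟶ A) (s : B ⟶ F) (t : F ⟶ I),
      IsShortExact f (a ≫ p) ∧ IsShortExact s t := by
  have := h₂.epi
  have sq := IsPullback.of_hasPullback i a
  obtain ⟨s, -, hs⟩ := of_isPullback sq.flip h₂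
  exact ⟨_, _, s, _, comp_of_isPullback sq h₁, hs⟩

lemma exists_comp_mono {X E P : C} {i : X ⟶ E} {p : E ⟶ P} {b : E ⟶ B} {a : B ⟶ A}
    (h₁ : IsShortExact i p) (h₂ : IsShortExact b a) :
    ∃ (Q : C) (q : B ⟶ Q) (s : P ⟶ Q) (t : Q ⟶ A),
      IsShortExact (i ≫ b) q ∧ IsShortExact s t := by
  obtain ⟨F, f, s, t, hf, hs⟩ := exists_comp_epi h₁.op h₂.op
  exact ⟨F.unop, f.unop, t.unop, s.unop, hf.unop, hs.unop⟩

lemma cokernel_desc {N Q X Y P : C} {n : N ⟶ Q} {q : Q ⟶ Y} {i : X ⟶ Y} {c : Y ⟶ P}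
    (hQ : IsShortExact n q) (hY : IsShortExact i c) {j : X ⟶ Q} (hj : j ≫ q = i) :
    IsShortExact (n ≫ cokernel.π j) (cokernel.desc j (q ≫ c)
      (by rw [reassoc_of% hj, hY.comp_eq_zero])) := by
  have := hY.mono
  have := hY.epi
  have := hQ.mono
  have := hQ.epi
  have : Mono j := mono_of_mono_fac hj
  have : Epi (cokernel.desc j (q ≫ c) (by rw [reassoc_of% hj, hY.comp_eq_zero])) :=
    epi_of_epi_fac (cokernel.π_desc j _ _)
  have : Mono (n ≫ cokernel.π j) := by
    refine Preadditive.mono_of_cancel_zero _ fun x hx => ?_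
    obtain ⟨l, hl⟩ := (cokernel_π j).exists_lift (x ≫ n) (by rw [Category.assoc, hx])
    have hl₀ : l = 0 := by
      rw [← cancel_mono i, ← hj, reassoc_of% hl, hQ.comp_eq_zero, comp_zero, zero_comp]
    rw [← cancel_mono n, ← hl, hl₀, zero_comp, zero_comp]
  refine of_exists_desc (by rw [Category.assoc, cokernel.π_desc, ← Category.assoc,
    hQ.comp_eq_zero, zero_comp]) fun k hk => ?_
  obtain ⟨l, hl⟩ := hQ.exists_desc (cokernel.π j ≫ k) (by rw [← Category.assoc, hk])
  obtain ⟨l', hl'⟩ := hY.exists_desc l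
    (by rw [← hj, Category.assoc, hl, cokernel.condition_assoc, zero_comp])
  exact ⟨l', by rw [← cancel_epi (cokernel.π j), cokernel.π_desc_assoc, Category.assoc, hl', hl]⟩

lemma comp_of_epi_kernel {K' K K'' M M' P : C} {c' : K' ⟶ K} {c : K ⟶ K''} {ι : K ⟶ M}
    {m : M ⟶ M'} {κ : K'' ⟶ P} {π : P ⟶ M'} {φ : M ⟶ P} (hK : IsShortExact c' c)
    (hM : IsShortExact ι m) (hP : IsShortExact κ π) (w₁ : ι ≫ φ = c ≫ κ) (w₂ : φ ≫ π = m) :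
    IsShortExact (c' ≫ ι) φ := by
  have := hK.mono
  have := hK.epi
  have := hM.mono
  have := hM.epi
  have := hP.mono
  have : Epi φ := by
    refine Preadditive.epi_of_cancel_zero _ fun k hk => ?_
    have hκ : κ ≫ k = 0 := by
      rw [← cancel_epi c, ← reassoc_of% w₁, hk, comp_zero, comp_zero]
    obtain ⟨l, rfl⟩ := hP.exists_desc k hκ
    have hl : l = 0 := by rw [← cancel_epi m, ← w₂, Category.assoc, hk, comp_zero]
    rw [hl, comp_zero]
  have w : (c' ≫ ι) ≫ φ = 0 := by
    rw [Category.assoc, w₁, reassoc_of% hK.comp_eq_zero, zero_comp]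
  refine of_exists_lift w fun k hk => ?_
  obtain ⟨l, rfl⟩ := hM.exists_lift k (by rw [← w₂, reassoc_of% hk, zero_comp])
  obtain ⟨l', rfl⟩ := hK.exists_lift l
    (by rw [← cancel_mono κ, Category.assoc, ← w₁, ← Category.assoc, hk, zero_comp])
  exact ⟨l', (Category.assoc _ _ _).symm⟩

lemma nonempty_iso {B' D' : C} {i' : A ⟶ B'} {p' : B' ⟶ D'} (h : IsShortExact i p)
    (h' : IsShortExact i' p') (e : B ≅ B') (he : i ≫ e.hom = i') : Nonempty (D ≅ D') := by
  have := h.epi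
  have := h'.epi
  have he' : i' ≫ e.inv = i := by rw [← he, Category.assoc, e.hom_inv_id, Category.comp_id]
  obtain ⟨x, hx⟩ := h.exists_desc (e.hom ≫ p') (by rw [reassoc_of% he, h'.comp_eq_zero])
  obtain ⟨y, hy⟩ := h'.exists_desc (e.inv ≫ p) (by rw [reassoc_of% he', h.comp_eq_zero])
  refine ⟨x, y, ?_, ?_⟩
  · rw [← cancel_epi p, reassoc_of% hx, hy, e.hom_inv_id_assoc, Category.comp_id]
  · rw [← cancel_epi p', reassoc_of% hy, hx, e.inv_hom_id_assoc, Category.comp_id]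

lemma biprod_inl_snd (X Y : C) : IsShortExact (biprod.inl : X ⟶ X ⊞ Y) biprod.snd :=
  ⟨biprod.inl_snd, (ShortComplex.Splitting.ofHasBinaryBiproduct X Y).shortExact⟩

end IsShortExact

end ShortExact

/-! ### Vanishing of `Ext¹` -/

section Ext1Zero

variable {C : Type*} [Category C] [Abelian C]

namespace Ext1Zero

variable {A B : C}

lemma exists_section (h : Ext1Zero A B) {E : C} {i : B ⟶ E} {p : E ⟶ A}
    (hs : IsShortExact i p) : ∃ s : A ⟶ E, s ≫ p = 𝟙 A :=
  h E i p hs.comp_eq_zero hs.shortExact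

lemma of_exists_section
    (h : ∀ {E : C} {i : B ⟶ E} {p : E ⟶ A}, IsShortExact i p → ∃ s : A ⟶ E, s ≫ p = 𝟙 A) :
    Ext1Zero A B :=
  fun _ _ _ w hs => h ⟨w, hs⟩

lemma nonempty_splitting (h : Ext1Zero A B) {E : C} {i : B ⟶ E} {p : E ⟶ A}
    (hs : IsShortExact i p) : Nonempty (ShortComplex.mk i p hs.comp_eq_zero).Splitting := by
  obtain ⟨s, hs'⟩ := h.exists_section hs
  exact ⟨.ofExactOfSection _ hs.shortExact.exact s hs' hs.mono⟩

lemma of_exists_retraction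
    (h : ∀ {E : C} {i : B ⟶ E} {p : E ⟶ A}, IsShortExact i p → ∃ r : E ⟶ B, i ≫ r = 𝟙 B) :
    Ext1Zero A B :=
  of_exists_section fun hs => by
    obtain ⟨r, hr⟩ := h hs
    let σ : ShortComplex.Splitting (.mk _ _ hs.comp_eq_zero) :=
      .ofExactOfRetraction _ hs.shortExact.exact r hr hs.epi
    exact ⟨σ.s, σ.s_g⟩

lemma hasLiftingProperty (h : Ext1Zero A B) {X Y M Z : C} {i : X ⟶ Y} {c : Y ⟶ A}
    {n : B ⟶ M} {p : M ⟶ Z} (hi : IsShortExact i c) (hp : IsShortExact n p) :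
    HasLiftingProperty i p where
  sq_hasLift {f g} sq := by
    have cart := IsPullback.of_hasPullback g p
    obtain ⟨n', -, hQ⟩ := IsShortExact.of_isPullback cart.flip hp
    let j : X ⟶ pullback g p := pullback.lift i f sq.w.symm
    have hj : j ≫ pullback.fst g p = i := pullback.lift_fst _ _ _
    obtain ⟨σ⟩ := h.nonempty_splitting (hQ.cokernel_desc hi hj)
    -- The splitting retracts the pulled back sequence by a map that kills `X`.
    let τ := ShortComplex.Splitting.ofExactOfRetraction _ hQ.shortExact.exact
      (cokernel.π j ≫ σ.r) (by simpa only [Category.assoc] using σ.f_r) hQ.epi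
    have hjτ : j ≫ τ.r = 0 := by
      change j ≫ cokernel.π j ≫ σ.r = 0
      rw [cokernel.condition_assoc, zero_comp]
    have hτ : i ≫ τ.s = j := by
      have := j ≫= τ.id
      rwa [Preadditive.comp_add, reassoc_of% hjτ, zero_comp, zero_add, ← Category.assoc,
        hj, Category.comp_id] at this
    exact ⟨⟨{ l := τ.s ≫ pullback.snd g p
              fac_left := by rw [reassoc_of% hτ, pullback.lift_snd]
              fac_right := by
                rw [Category.assoc, ← pullback.condition, ← Category.assoc, τ.s_g,
                  Category.id_comp] }⟩⟩

lemma exists_lift (h : Ext1Zero A B) {X Y M Z : C} {i : X ⟶ Y} {c : Y ⟶ A}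
    {n : B ⟶ M} {p : M ⟶ Z} (hi : IsShortExact i c) (hp : IsShortExact n p) {f : X ⟶ M}
    {g : Y ⟶ Z} (w : f ≫ p = i ≫ g) : ∃ l : Y ⟶ M, i ≫ l = f ∧ l ≫ p = g := by
  have := h.hasLiftingProperty hi hp
  exact ⟨(CommSq.mk w).lift, CommSq.fac_left _, CommSq.fac_right _⟩

lemma exists_lift_of_shortExact (h : Ext1Zero A B) {M Z : C} {n : B ⟶ M} {p : M ⟶ Z}
    (hp : IsShortExact n p) (g : A ⟶ Z) : ∃ l : A ⟶ M, l ≫ p = g := by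
  obtain ⟨l, -, hl⟩ := h.exists_lift (.zero_left A) hp (f := 0) (g := g) (by simp)
  exact ⟨l, hl⟩

lemma exists_extension (h : Ext1Zero A B) {X Y : C} {i : X ⟶ Y} {c : Y ⟶ A}
    (hi : IsShortExact i c) (f : X ⟶ B) : ∃ l : Y ⟶ B, i ≫ l = f := by
  obtain ⟨l, hl, -⟩ := h.exists_lift hi (.zero_right B) (f := f) (g := 0) (by simp)
  exact ⟨l, hl⟩

lemma of_shortExact_left {A₁ A₂ : C} {i : A₁ ⟶ A} {p : A ⟶ A₂} (hs : IsShortExact i p)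
    (h₁ : Ext1Zero A₁ B) (h₂ : Ext1Zero A₂ B) : Ext1Zero A B :=
  of_exists_section fun hE => by
    obtain ⟨l, hl⟩ := h₁.exists_lift_of_shortExact hE i
    obtain ⟨s, -, hs⟩ := h₂.exists_lift hs hE (f := l) (g := 𝟙 A) (by rw [hl, Category.comp_id])
    exact ⟨s, hs⟩

lemma of_shortExact_right {B₁ B₂ : C} {i : B₁ ⟶ B} {p : B ⟶ B₂} (hs : IsShortExact i p)
    (h₁ : Ext1Zero A B₁) (h₂ : Ext1Zero A B₂) : Ext1Zero A B :=
  of_exists_retraction fun hE => by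
    obtain ⟨l, hl⟩ := h₂.exists_extension hE p
    obtain ⟨s, hs, -⟩ := h₁.exists_lift hE hs (f := 𝟙 B) (g := l) (by rw [hl, Category.id_comp])
    exact ⟨s, hs⟩

lemma of_retract {A' : C} (h : Ext1Zero A B) (r : Retract A' A) : Ext1Zero A' B :=
  of_exists_section fun hE => by
    obtain ⟨l, hl⟩ := h.exists_lift_of_shortExact hE r.r
    exact ⟨r.i ≫ l, by rw [Category.assoc, hl, r.retract]⟩

lemma of_iso_left {A' : C} (h : Ext1Zero A B) (e : A ≅ A') : Ext1Zero A' B :=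
  h.of_retract (.ofIso e.symm)

lemma of_iso_right {B' : C} (h : Ext1Zero A B) (e : B ≅ B') : Ext1Zero A B' :=
  of_exists_retraction fun hE => by
    obtain ⟨l, hl⟩ := h.exists_extension hE e.inv
    exact ⟨l ≫ e.hom, by rw [reassoc_of% hl, e.inv_hom_id]⟩

lemma of_subsingleton_ext {C : Type u} [Category.{v} C] [Abelian C] [HasExt.{w} C] {A B : C}
    (h : Subsingleton (Abelian.Ext A B 1)) : Ext1Zero A B := by
  intro E i p w hS
  obtain ⟨x, hx⟩ := Abelian.Ext.covariant_sequence_exact₃ A hS (Abelian.Ext.mk₀ (𝟙 A)) (zero_add 1)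
    (Subsingleton.elim _ _)
  obtain ⟨s, rfl⟩ := Abelian.Ext.homEquiv₀.symm.surjective x
  exact ⟨s, Abelian.Ext.homEquiv₀.symm.injective (by simpa using hx)⟩

end Ext1Zero

/-- A class of objects that is closed under extensions and isomorphisms. -/
structure IsExtensionClosed (S : Set C) : Prop where
  mem_of_shortExact {X Y Z : C} {f : X ⟶ Y} {g : Y ⟶ Z} (h : IsShortExact f g) :
    X ∈ S → Z ∈ S → Y ∈ S
  mem_of_iso {X Y : C} (e : X ≅ Y) : X ∈ S → Y ∈ S

namespace IsCotorsionPair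

section

variable {𝓐 𝓑 : Set C} (h : IsCotorsionPair 𝓐 𝓑)
include h

lemma ext1Zero {A B : C} (hA : A ∈ 𝓐) (hB : B ∈ 𝓑) : Ext1Zero A B := by
  rw [h.left_eq] at hA
  exact hA B hB

lemma isExtensionClosed_left : IsExtensionClosed 𝓐 := by
  rw [h.left_eq]
  exact ⟨fun hs hX hZ B hB => .of_shortExact_left hs (hX B hB) (hZ B hB),
    fun e hX B hB => (hX B hB).of_iso_left e⟩

lemma isExtensionClosed_right : IsExtensionClosed 𝓑 := by
  rw [h.right_eq]
  exact ⟨fun hs hX hZ A hA => .of_shortExact_right hs (hX A hA) (hZ A hA),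
    fun e hX A hA => (hX A hA).of_iso_right e⟩

end

lemma mem_right_of_shortExact {C : Type u} [Category.{v} C] [Abelian C] [HasExt.{w} C]
    {𝓐 𝓑 : Set C} (h : IsCotorsionPair 𝓐 𝓑) (hher : IsHereditary 𝓐 𝓑) {X Y Z : C} {f : X ⟶ Y}
    {g : Y ⟶ Z} (hs : IsShortExact f g) (hX : X ∈ 𝓑) (hY : Y ∈ 𝓑) : Z ∈ 𝓑 := by
  rw [h.right_eq]
  refine fun A hA => .of_subsingleton_ext (subsingleton_of_forall_eq 0 fun x => ?_)
  have := hher A hA X hX 2 one_le_two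
  have := hher A hA Y hY 1 le_rfl
  obtain ⟨y, rfl⟩ := Abelian.Ext.covariant_sequence_exact₃ A hs.shortExact x rfl
    (Subsingleton.elim _ _)
  rw [Subsingleton.elim y 0, Abelian.Ext.zero_comp]

end IsCotorsionPair

end Ext1Zero

/-! ### Acyclic complexes and their cycles -/

section Complexes

open HomologicalComplex

lemma exactAt_succ_iff_up_to_refinements (X : CochainComplex 𝒢 ℤ) (n : ℤ) :
    X.ExactAt (n + 1) ↔ ∀ ⦃A : 𝒢⦄ (x : A ⟶ X.X (n + 1)) (_ : x ≫ X.d (n + 1) (n + 1 + 1) = 0),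
      ∃ (A' : 𝒢) (π : A' ⟶ A) (_ : Epi π) (y : A' ⟶ X.X n), π ≫ x = y ≫ X.d n (n + 1) :=
  X.exactAt_iff_exact_up_to_refinements n (n + 1) (n + 1 + 1) (by simp) (by simp)

lemma acyclic_of_exactAt_succ {X : CochainComplex 𝒢 ℤ} (h : ∀ n, X.ExactAt (n + 1)) :
    X.Acyclic :=
  fun n => by simpa only [sub_add_cancel] using h (n - 1)

lemma isShortExact_cycles {X : CochainComplex 𝒢 ℤ} (h : X.Acyclic) (n : ℤ) :
    IsShortExact (X.iCycles n) (X.toCycles n (n + 1)) := by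
  have : Epi (X.toCycles n (n + 1)) := by
    rw [epi_iff_surjective_up_to_refinements]
    intro A y
    obtain ⟨A', π, hπ, x, hx⟩ :=
      (exactAt_succ_iff_up_to_refinements X n).1 (h _) (y ≫ X.iCycles _) (by simp)
    refine ⟨A', π, hπ, x, ?_⟩
    rwa [← cancel_mono (X.iCycles (n + 1)), Category.assoc, Category.assoc, toCycles_i]
  refine .of_exists_lift ?_ fun k hk => ?_
  · rw [← cancel_mono (X.iCycles (n + 1)), Category.assoc, toCycles_i, iCycles_d, zero_comp]
  · exact ⟨X.liftCycles k (n + 1) (by simp) (by rw [← toCycles_i, reassoc_of% hk, zero_comp]),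
      X.liftCycles_i _ _ _ _⟩

namespace IsShortExact

variable {X Y Z : CochainComplex 𝒢 ℤ} {f : X ⟶ Y} {g : Y ⟶ Z}

lemma eval (h : IsShortExact f g) (n : ℤ) : IsShortExact (f.f n) (g.f n) :=
  ⟨by rw [← comp_f, h.comp_eq_zero, zero_f],
    (shortExact_iff_degreewise_shortExact _).1 h.shortExact n⟩

lemma of_eval (h : ∀ n, IsShortExact (f.f n) (g.f n)) : IsShortExact f g :=
  ⟨by ext n; exact (h n).comp_eq_zero,
    (shortExact_iff_degreewise_shortExact _).2 fun n => (h n).shortExact⟩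

lemma acyclic_mid (h : IsShortExact f g) (hX : X.Acyclic) (hZ : Z.Acyclic) : Y.Acyclic :=
  h.shortExact.acyclic_X₂ hX hZ

lemma acyclic_left (h : IsShortExact f g) (hY : Y.Acyclic) (hZ : Z.Acyclic) : X.Acyclic :=
  h.shortExact.acyclic_X₁ ⟨fun n => (quasiIsoAt_iff_exactAt g n (hY n)).2 (hZ n)⟩

lemma acyclic_right (h : IsShortExact f g) (hX : X.Acyclic) (hY : Y.Acyclic) : Z.Acyclic :=
  h.shortExact.acyclic_X₃ ⟨fun n => (quasiIsoAt_iff_exactAt f n (hX n)).2 (hY n)⟩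

protected lemma cyclesMap (h : IsShortExact f g) (hX : X.Acyclic) (n : ℤ) :
    IsShortExact (cyclesMap f n) (cyclesMap g n) := by
  have := h.mono
  have := (h.eval (n + 1 + 1)).mono
  have := (h.eval n).epi
  have : Epi (HomologicalComplex.cyclesMap g n) := by
    rw [epi_iff_surjective_up_to_refinements]
    intro A z
    obtain ⟨A₁, π₁, _, y, hy⟩ := surjective_up_to_refinements_of_epi (g.f n) (z ≫ Z.iCycles n)
    obtain ⟨x, hx⟩ := (h.eval (n + 1)).exists_lift (y ≫ Y.d n (n + 1)) (by
      rw [Category.assoc, ← g.comm, ← Category.assoc, ← hy]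
      simp only [Category.assoc, iCycles_d, comp_zero])
    obtain ⟨A₂, π₂, _, t, ht⟩ := (exactAt_succ_iff_up_to_refinements X n).1 (hX _) x (by
      rw [← cancel_mono (f.f (n + 1 + 1)), Category.assoc, ← f.comm, reassoc_of% hx]
      simp only [d_comp_d, comp_zero, zero_comp])
    have hcycle : (π₂ ≫ y - t ≫ f.f n) ≫ Y.d n (n + 1) = 0 := by
      rw [Preadditive.sub_comp, Category.assoc, Category.assoc, f.comm, ← reassoc_of% ht, hx,
        sub_self]
    refine ⟨A₂, π₂ ≫ π₁, inferInstance, Y.liftCycles _ (n + 1) (by simp) hcycle, ?_⟩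
    rw [← cancel_mono (Z.iCycles n)]
    simp only [Category.assoc, cyclesMap_i, liftCycles_i_assoc, Preadditive.sub_comp, ← hy,
      (h.eval n).comp_eq_zero, comp_zero, sub_zero]
  exact ⟨by rw [← cyclesMap_comp, h.comp_eq_zero, cyclesMap_zero],
    { exact := cycles_left_exact _ h.shortExact.exact n
      mono_f := (inferInstance : Mono (HomologicalComplex.cyclesMap f n))
      epi_g := ‹_› }⟩

end IsShortExact

/-- `X` is obtained by splicing the short exact sequences `0 → Z n → Xⁿ → Z (n + 1) → 0`, which
makes it acyclic with cycles `Z`. -/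
structure IsSpliced (X : CochainComplex 𝒢 ℤ) {Z : ℤ → 𝒢} (i : ∀ n, Z n ⟶ X.X n)
    (p : ∀ n, X.X n ⟶ Z (n + 1)) : Prop where
  isShortExact (n : ℤ) : IsShortExact (i n) (p n)
  d_eq (n : ℤ) : X.d n (n + 1) = p n ≫ i (n + 1)

namespace IsSpliced

variable {X : CochainComplex 𝒢 ℤ} {Z : ℤ → 𝒢} {i : ∀ n, Z n ⟶ X.X n}
  {p : ∀ n, X.X n ⟶ Z (n + 1)} (h : IsSpliced X i p)
include h

lemma comp_eq_zero_of_comp_d {A : 𝒢} {n : ℤ} (x : A ⟶ X.X n) (hx : x ≫ X.d n (n + 1) = 0) :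
    x ≫ p n = 0 := by
  have := (h.isShortExact (n + 1)).mono
  rwa [← cancel_mono (i (n + 1)), Category.assoc, zero_comp, ← h.d_eq]

lemma acyclic : X.Acyclic := by
  refine acyclic_of_exactAt_succ fun n => (exactAt_succ_iff_up_to_refinements _ n).2 ?_
  intro A x hx
  obtain ⟨l, hl⟩ := (h.isShortExact (n + 1)).exists_lift x (h.comp_eq_zero_of_comp_d x hx)
  have := (h.isShortExact n).epi
  obtain ⟨A', π, hπ, y, hy⟩ := surjective_up_to_refinements_of_epi (p n) l
  exact ⟨A', π, hπ, y, by rw [h.d_eq, ← reassoc_of% hy, hl]⟩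

lemma exists_cycles_iso (n : ℤ) : ∃ e : X.cycles n ≅ Z n, e.hom ≫ i n = X.iCycles n := by
  have := (h.isShortExact n).mono
  obtain ⟨l, hl⟩ := (h.isShortExact n).exists_lift _
    (h.comp_eq_zero_of_comp_d (X.iCycles n) (X.iCycles_d _ _))
  let l' : Z n ⟶ X.cycles n := X.liftCycles (i n) (n + 1) (by simp)
    (by rw [h.d_eq, reassoc_of% (h.isShortExact n).comp_eq_zero, zero_comp])
  have hl' : l' ≫ X.iCycles n = i n := liftCycles_i ..
  refine ⟨⟨l, l', ?_, ?_⟩, hl⟩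
  · rw [← cancel_mono (X.iCycles n), Category.assoc, hl', hl, Category.id_comp]
  · rw [← cancel_mono (i n), Category.assoc, hl, hl', Category.id_comp]

lemma mem_tilde {S : Set 𝒢} (hS : IsExtensionClosed S) (hZ : ∀ n, Z n ∈ S) : X ∈ Tilde S :=
  have hc (n : ℤ) : X.cycles n ∈ S :=
    have ⟨e, _⟩ := h.exists_cycles_iso n
    hS.mem_of_iso e.symm (hZ n)
  ⟨h.acyclic, fun n => hS.mem_of_shortExact (h.isShortExact n) (hZ n) (hZ (n + 1)), hc⟩

end IsSpliced

end Complexes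

namespace Tilde

variable {S : Set 𝒢}

lemma acyclic {X : CochainComplex 𝒢 ℤ} (h : X ∈ Tilde S) : X.Acyclic := h.1

lemma cycles_mem {X : CochainComplex 𝒢 ℤ} (h : X ∈ Tilde S) (n : ℤ) : X.cycles n ∈ S := h.2.2 n

lemma of_cycles_mem (hS : IsExtensionClosed S) {X : CochainComplex 𝒢 ℤ} (h : X.Acyclic)
    (hc : ∀ n, X.cycles n ∈ S) : X ∈ Tilde S :=
  ⟨h, fun n => hS.mem_of_shortExact (isShortExact_cycles h n) (hc n) (hc (n + 1)), hc⟩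

lemma of_shortExact (hS : IsExtensionClosed S) {X Y Z : CochainComplex 𝒢 ℤ} {f : X ⟶ Y}
    {g : Y ⟶ Z} (h : IsShortExact f g) (hX : X ∈ Tilde S) (hZ : Z ∈ Tilde S) : Y ∈ Tilde S :=
  of_cycles_mem hS (h.acyclic_mid (acyclic hX) (acyclic hZ)) fun n =>
    hS.mem_of_shortExact (h.cyclesMap (acyclic hX) n) (cycles_mem hX n) (cycles_mem hZ n)

end Tilde

/-! ### Orthogonality of `Ã` and `B̃`, and approximation of acyclic complexes -/

section TildePair

open HomologicalComplex

section Orthogonality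

variable {U V M : CochainComplex 𝒢 ℤ} {v : V ⟶ M} {q : M ⟶ U}

lemma comp_toCycles (q : M ⟶ U) (n : ℤ) :
    q.f n ≫ U.toCycles n (n + 1) = M.toCycles n (n + 1) ≫ cyclesMap q (n + 1) := by
  simp only [← cancel_mono (U.iCycles (n + 1)), Category.assoc, toCycles_i, cyclesMap_i,
    toCycles_i_assoc, q.comm]

lemma IsShortExact.pullback_cycles (h : IsShortExact v q) (hV : V.Acyclic) (hU : U.Acyclic)
    (n : ℤ) :
    IsShortExact (V.iCycles n ≫ v.f n)
      (pullback.lift (q.f n) (M.toCycles n (n + 1)) (comp_toCycles q n)) := by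
  obtain ⟨κ, hκ, hP⟩ := IsShortExact.of_isPullback
    (IsPullback.of_hasPullback (U.toCycles n (n + 1)) (cyclesMap q (n + 1)))
    (isShortExact_cycles hU n)
  have hM := isShortExact_cycles (h.acyclic_mid hV hU) n
  rw [← cyclesMap_i v n]
  refine (h.cyclesMap hV n).comp_of_epi_kernel hM hP ?_ (pullback.lift_snd _ _ _)
  apply pullback.hom_ext
  · rw [Category.assoc, Category.assoc, pullback.lift_fst, hκ, cyclesMap_i]
  · rw [Category.assoc, Category.assoc, pullback.lift_snd, hP.comp_eq_zero, hM.comp_eq_zero,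
      comp_zero]

lemma IsShortExact.exists_section_of_cycles_section (h : IsShortExact v q) (hV : V.Acyclic)
    (hU : U.Acyclic) (n : ℤ) (hext : Ext1Zero (U.cycles (n + 1)) (V.cycles n))
    {s : U.cycles n ⟶ M.cycles n} {s' : U.cycles (n + 1) ⟶ M.cycles (n + 1)}
    (hs : s ≫ cyclesMap q n = 𝟙 _) (hs' : s' ≫ cyclesMap q (n + 1) = 𝟙 _) :
    ∃ t : U.X n ⟶ M.X n, t ≫ q.f n = 𝟙 _ ∧ U.iCycles n ≫ t = s ≫ M.iCycles n ∧
      t ≫ M.d n (n + 1) = U.toCycles n (n + 1) ≫ s' ≫ M.iCycles (n + 1) := by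
  obtain ⟨t, ht, ht'⟩ := hext.exists_lift (isShortExact_cycles hU n) (h.pullback_cycles hV hU n)
    (f := s ≫ M.iCycles n)
    (g := pullback.lift (𝟙 _) (U.toCycles n (n + 1) ≫ s')
      (by rw [Category.assoc, hs', Category.comp_id, Category.id_comp])) (by
      apply pullback.hom_ext
      · simp only [Category.assoc, pullback.lift_fst, Category.comp_id]
        rw [← cyclesMap_i, reassoc_of% hs]
      · simp only [Category.assoc, pullback.lift_snd]
        rw [(isShortExact_cycles (h.acyclic_mid hV hU) n).comp_eq_zero, comp_zero,
          reassoc_of% (isShortExact_cycles hU n).comp_eq_zero, zero_comp])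
  have ht_fst := ht' =≫ pullback.fst _ _
  have ht_snd := ht' =≫ pullback.snd _ _
  rw [Category.assoc, pullback.lift_fst, pullback.lift_fst] at ht_fst
  rw [Category.assoc, pullback.lift_snd, pullback.lift_snd] at ht_snd
  exact ⟨t, ht_fst, ht, by rw [← toCycles_i, reassoc_of% ht_snd]⟩

lemma Ext1Zero.of_mem_tilde {𝓐 𝓑 : Set 𝒢} (h : ∀ A ∈ 𝓐, ∀ B ∈ 𝓑, Ext1Zero A B)
    (hU : U ∈ Tilde 𝓐) (hV : V ∈ Tilde 𝓑) : Ext1Zero U V := by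
  refine Ext1Zero.of_exists_section fun {M v q} hs => ?_
  choose s hs_section using fun n => (h _ (Tilde.cycles_mem hU n) _
    (Tilde.cycles_mem hV n)).exists_section (hs.cyclesMap (Tilde.acyclic hV) n)
  choose t ht_section ht_cycles ht_d using fun n =>
    hs.exists_section_of_cycles_section (Tilde.acyclic hV) (Tilde.acyclic hU) n
      (h _ (Tilde.cycles_mem hU (n + 1)) _ (Tilde.cycles_mem hV n)) (hs_section n)
      (hs_section (n + 1))
  refine ⟨CochainComplex.ofHom t fun n => ?_, ?_⟩
  · rw [ht_d, ← ht_cycles, toCycles_i_assoc]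
  · ext n
    exact ht_section n

end Orthogonality

section Horseshoe

lemma IsSpliced.mono_of_mono_cycles {E K : CochainComplex 𝒢 ℤ} {B : ℤ → 𝒢}
    {i : ∀ n, B n ⟶ K.X n} {p : ∀ n, K.X n ⟶ B (n + 1)} (hK : IsSpliced K i p) (hE : E.Acyclic)
    (f : E ⟶ K) {b : ∀ n, E.cycles n ⟶ B n} [∀ n, Mono (b n)]
    (h₁ : ∀ n, E.iCycles n ≫ f.f n = b n ≫ i n)
    (h₂ : ∀ n, f.f n ≫ p n = E.toCycles n (n + 1) ≫ b (n + 1)) : Mono f := by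
  suffices ∀ n, Mono (f.f n) from mono_of_mono_f f this
  refine fun n => Preadditive.mono_of_cancel_zero _ fun g hg => ?_
  have := (hK.isShortExact n).mono
  obtain ⟨l, rfl⟩ := (isShortExact_cycles hE n).exists_lift g
    (by rw [← cancel_mono (b (n + 1)), Category.assoc, ← h₂, reassoc_of% hg, zero_comp, zero_comp])
  rw [Category.assoc, h₁] at hg
  rw [zero_of_comp_mono (b n ≫ i n) hg, zero_comp]

lemma IsSpliced.nonempty_cycles_iso {E K Q : CochainComplex 𝒢 ℤ} {B : ℤ → 𝒢}
    {i : ∀ n, B n ⟶ K.X n} {p : ∀ n, K.X n ⟶ B (n + 1)} (hK : IsSpliced K i p) (hE : E.Acyclic)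
    {f : E ⟶ K} {g : K ⟶ Q} (hfg : IsShortExact f g) {n : ℤ} {A : 𝒢} {b : E.cycles n ⟶ B n}
    {a : B n ⟶ A} (hA : IsShortExact b a) (hf : E.iCycles n ≫ f.f n = b ≫ i n) :
    Nonempty (Q.cycles n ≅ A) := by
  obtain ⟨e, he⟩ := hK.exists_cycles_iso n
  have := (hK.isShortExact n).mono
  exact (hfg.cyclesMap hE n).nonempty_iso hA e
    (by rw [← cancel_mono (i n), Category.assoc, he, cyclesMap_i, hf])

variable [HasExt.{w} 𝒢] {𝓐 𝓑 : Set 𝒢}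

lemma IsCompleteCotorsionPair.exists_horseshoe (hpair : IsCompleteCotorsionPair 𝓐 𝓑)
    (hher : IsHereditary 𝓐 𝓑) {Z E Z' B B' A' : 𝒢} {z : Z ⟶ E} {e : E ⟶ Z'} {b : Z ⟶ B}
    {b' : Z' ⟶ B'} {a' : B' ⟶ A'} (hE : IsShortExact z e) (hB' : IsShortExact b' a')
    (hB : B ∈ 𝓑) (hA' : A' ∈ 𝓐) :
    ∃ (M : 𝒢) (i : B ⟶ M) (p : M ⟶ B') (m : E ⟶ M),
      IsShortExact i p ∧ z ≫ m = b ≫ i ∧ m ≫ p = e ≫ b' := by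
  have sq := IsPushout.of_hasPushout z b
  obtain ⟨e₁, he₁, hP⟩ := IsShortExact.of_isPushout sq hE
  obtain ⟨B₁, A₁, k, r, w, hk, hB₁, -⟩ := hpair.approx₁ (pushout z b)
  have := hk.mono_f
  have := hP.mono
  -- By heredity this cokernel lies in `𝓑`, so the map from `Z'` to it extends along `b'`.
  have hcoker := IsShortExact.cokernel_π (pushout.inr z b ≫ k)
  have hcoker_mem := hpair.mem_right_of_shortExact hher hcoker hB hB₁
  obtain ⟨d, hd⟩ := hP.exists_desc (k ≫ cokernel.π (pushout.inr z b ≫ k))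
    (by rw [← Category.assoc, cokernel.condition])
  obtain ⟨φ, hφ⟩ := (hpair.ext1Zero hA' hcoker_mem).exists_extension hB' d
  have cart := IsPullback.of_hasPullback φ (cokernel.π (pushout.inr z b ≫ k))
  obtain ⟨i, hi, hM⟩ := IsShortExact.of_isPullback cart.flip hcoker
  refine ⟨_, i, _, cart.lift (e ≫ b') (pushout.inl z b ≫ k) ?_, hM, ?_, cart.lift_fst _ _ _⟩
  · rw [Category.assoc, hφ, ← he₁, Category.assoc, hd, Category.assoc]
  · apply cart.hom_ext
    · rw [Category.assoc, cart.lift_fst, Category.assoc, hM.comp_eq_zero, comp_zero,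
        reassoc_of% hE.comp_eq_zero, zero_comp]
    · rw [Category.assoc, cart.lift_snd, Category.assoc, hi, sq.w_assoc]

lemma IsCompleteCotorsionPair.exists_tilde_right (hpair : IsCompleteCotorsionPair 𝓐 𝓑)
    (hher : IsHereditary 𝓐 𝓑) {E : CochainComplex 𝒢 ℤ} (hE : E.Acyclic) :
    ∃ (B A : CochainComplex 𝒢 ℤ) (i : E ⟶ B) (p : B ⟶ A),
      IsShortExact i p ∧ B ∈ Tilde 𝓑 ∧ A ∈ Tilde 𝓐 := by
  choose B A b a w hs hB hA using fun n => hpair.approx₁ (E.cycles n)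
  have hba (n : ℤ) : IsShortExact (b n) (a n) := ⟨w n, hs n⟩
  have (n : ℤ) : Mono (b n) := (hba n).mono
  choose M i p m hM hm_cycles hm_to using fun n => hpair.exists_horseshoe hher (b := b n)
    (isShortExact_cycles hE n) (hba (n + 1)) (hB n) (hA (n + 1))
  let K : CochainComplex 𝒢 ℤ := CochainComplex.of M (fun n => p n ≫ i (n + 1)) fun n => by
    rw [Category.assoc, reassoc_of% (hM (n + 1)).comp_eq_zero, zero_comp, comp_zero]
  have hK : IsSpliced K i p := ⟨hM, fun n => by simp [K]⟩
  let f : E ⟶ K := CochainComplex.ofHom m fun n => by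
    rw [hK.d_eq, ← Category.assoc, hm_to, Category.assoc, ← hm_cycles, toCycles_i_assoc]
  have : Mono f := hK.mono_of_mono_cycles hE f hm_cycles hm_to
  have hf := IsShortExact.cokernel_π f
  refine ⟨K, _, f, _, hf, hK.mem_tilde hpair.isExtensionClosed_right hB,
    .of_cycles_mem hpair.isExtensionClosed_left (hf.acyclic_right hE hK.acyclic) fun n => ?_⟩
  obtain ⟨e⟩ := hK.nonempty_cycles_iso hE hf (hba n) (hm_cycles n)
  exact hpair.isExtensionClosed_left.mem_of_iso e.symm (hA n)

end Horseshoe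

section Approximation

variable {𝓐 𝓑 : Set 𝒢}

lemma IsCompleteCotorsionPair.exists_epi_tilde (hpair : IsCompleteCotorsionPair 𝓐 𝓑)
    (X : CochainComplex 𝒢 ℤ) :
    ∃ (A : CochainComplex 𝒢 ℤ) (f : A ⟶ X), Epi f ∧ A ∈ Tilde 𝓐 := by
  choose _ A _ α _ hα _ hA using fun n => hpair.approx₂ (X.X (n - 1))
  let β (n : ℤ) : A (n + 1) ⟶ X.X n := α (n + 1) ≫ (X.XIsoOfEq (by simp)).hom
  have (n : ℤ) : Epi (β n) := have := (hα (n + 1)).epi_g; epi_comp _ _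
  let D : CochainComplex 𝒢 ℤ := CochainComplex.of (fun n => A n ⊞ A (n + 1))
    (fun n => biprod.snd ≫ biprod.inl) (by simp)
  have hD : IsSpliced D (fun _ => biprod.inl) (fun _ => biprod.snd) :=
    ⟨fun _ => .biprod_inl_snd _ _, fun n => by simp [D]⟩
  let F (n : ℤ) : A n ⊞ A (n + 1) ⟶ X.X n := biprod.desc (α n ≫ X.d (n - 1) n) (β n)
  have hF (n : ℤ) : biprod.inr ≫ F n = β n := biprod.inr_desc _ _
  refine ⟨D, CochainComplex.ofHom F fun n => ?_, ?_, hD.mem_tilde hpair.isExtensionClosed_left hA⟩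
  · rw [hD.d_eq]
    apply biprod.hom_ext' <;> simp [F, β]
  · exact epi_of_epi_f _ fun n => epi_of_epi_fac (hF n)

lemma IsCompleteCotorsionPair.exists_tilde_left [HasExt.{w} 𝒢]
    (hpair : IsCompleteCotorsionPair 𝓐 𝓑) (hher : IsHereditary 𝓐 𝓑)
    {E : CochainComplex 𝒢 ℤ} (hE : E.Acyclic) :
    ∃ (B A : CochainComplex 𝒢 ℤ) (i : B ⟶ A) (p : A ⟶ E),
      IsShortExact i p ∧ B ∈ Tilde 𝓑 ∧ A ∈ Tilde 𝓐 := by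
  obtain ⟨A₀, f, hf, hA₀⟩ := hpair.exists_epi_tilde E
  have hker := IsShortExact.kernel_ι f
  obtain ⟨B, A, b, a, hs, hB, hA⟩ :=
    hpair.exists_tilde_right hher (hker.acyclic_left (Tilde.acyclic hA₀) hE)
  obtain ⟨P, b', x', p', a', hP, hP'⟩ := hker.exists_pushout hs
  exact ⟨B, P, b', x', hP, hB, .of_shortExact hpair.isExtensionClosed_left hP' hA₀ hA⟩

end Approximation

end TildePair

/-! ### The small object argument for monomorphisms -/

section SmallObject

variable {C : Type u} [Category.{v} C] [Abelian C] {W : MorphismProperty C}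

lemma Ext1Zero.cokernel_of_mem_llp_rlp (hW : W ≤ .monomorphisms C) {K X I : C}
    (hK : ∀ ⦃A B : C⦄ (m : A ⟶ B), W m → Ext1Zero (cokernel m) K) {i : X ⟶ I}
    (hi : W.rlp.llp i) : Ext1Zero (cokernel i) K :=
  of_exists_section fun {E j r} hr => by
    have hrlp : W.rlp r := fun _ _ m hm =>
      have : Mono m := hW _ hm
      (hK m hm).hasLiftingProperty (.cokernel_π m) hr
    have := hi _ hrlp
    have sq : CommSq (0 : X ⟶ E) i r (cokernel.π i) := ⟨by simp⟩
    refine ⟨cokernel.desc i sq.lift sq.fac_left, ?_⟩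
    rw [← cancel_epi (cokernel.π i), cokernel.π_desc_assoc, sq.fac_right, Category.comp_id]

variable [IsGrothendieckAbelian.{v} C]

open MorphismProperty SmallObject in
lemma hasSmallObjectArgument_of_le_monomorphisms [IsSmall.{v} W] (hW : W ≤ monomorphisms C) :
    HasSmallObjectArgument.{v} W := by
  obtain ⟨κ, hκ', hκ⟩ := HasCardinalLT.exists_regular_cardinal.{v}
    (Σ f : Shrink.{v} W.toSet, Subobject ((equivShrink W.toSet).symm f).1.left)
  have : Fact κ.IsRegular := ⟨hκ'⟩
  have : Nonempty κ.ord.ToType := by simpa using hκ'.ne_zero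
  have := WellFoundedLT.toOrderBot κ.ord.ToType
  refine ⟨κ, inferInstance, inferInstance, { preservesColimit {A B X Y} i hi f hf := ?_ }⟩
  let hf' : (monomorphisms C).TransfiniteCompositionOfShape κ.ord.ToType f :=
    { toTransfiniteCompositionOfShape := hf.toTransfiniteCompositionOfShape
      map_mem j hj := by
        refine (?_ : _ ≤ monomorphisms C) _ (hf.attachCells j hj).pushouts_coproducts
        simpa only [pushouts_le_iff, coproducts_le_iff, ofHoms_homFamily] using hW }
  have (j j' : κ.ord.ToType) (φ : j ⟶ j') : Mono (hf'.F.map φ) := hf'.mem_map φ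
  apply IsGrothendieckAbelian.preservesColimit_coyoneda_obj_of_mono (Y := hf'.F) (κ := κ)
  obtain ⟨k, hk⟩ := (equivShrink W.toSet).symm.surjective ⟨Arrow.mk i, hi⟩
  have hA : ((equivShrink W.toSet).symm k).1.left = A := by rw [hk]; rfl
  subst hA
  exact hκ.of_injective (fun V => ⟨k, V⟩) fun _ _ h => by simpa using h

open ZeroObject in
lemma mono_of_mem_llp_rlp (hW : W ≤ .monomorphisms C) {X I : C} {i : X ⟶ I}
    (hi : W.rlp.llp i) : Mono i := by
  have hrlp : W.rlp (0 : Injective.under X ⟶ 0) := fun _ _ m hm =>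
    have : Mono m := hW _ hm
    ⟨fun {f _} _ => ⟨⟨⟨Injective.factorThru f m, Injective.comp_factorThru f m,
      (isZero_zero C).eq_of_tgt _ _⟩⟩⟩⟩
  have := hi _ hrlp
  have sq : CommSq (Injective.ι X) i (0 : Injective.under X ⟶ 0) 0 := ⟨by simp⟩
  exact mono_of_mono_fac sq.fac_left

open ZeroObject in
lemma exists_isShortExact_of_isSmall [MorphismProperty.IsSmall.{v} W]
    (hW : W ≤ .monomorphisms C) (X : C) :
    ∃ (I P : C) (i : X ⟶ I) (p : I ⟶ P), IsShortExact i p ∧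
      (∀ ⦃A B : C⦄ (m : A ⟶ B), W m → ∀ f : A ⟶ I, ∃ g, m ≫ g = f) ∧
      ∀ K : C, (∀ ⦃A B : C⦄ (m : A ⟶ B), W m → Ext1Zero (cokernel m) K) → Ext1Zero P K := by
  have := hasSmallObjectArgument_of_le_monomorphisms hW
  obtain ⟨I, i, q, -, hi, hq⟩ :=
    MorphismProperty.factorizationData W.rlp.llp W.rlp (0 : X ⟶ 0)
  have := mono_of_mem_llp_rlp hW hi
  refine ⟨I, cokernel i, i, cokernel.π i, .cokernel_π i, fun A B m hm f => ?_,
    fun K hK => .cokernel_of_mem_llp_rlp hW hK hi⟩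
  have := hq _ hm
  have sq : CommSq f m q 0 := ⟨(isZero_zero C).eq_of_tgt _ _⟩
  exact ⟨sq.lift, sq.fac_left⟩

end SmallObject

/-! ### Spheres and disks -/

section Spheres

open HomologicalComplex

/-- The sphere complex, with `A` in degree `n` and zero elsewhere. -/
noncomputable abbrev sphere (n : ℤ) (A : 𝒢) : CochainComplex 𝒢 ℤ :=
  (single 𝒢 (ComplexShape.up ℤ) n).obj A

/-- The disk complex `A = A` in degrees `n` and `n + 1`. -/
noncomputable abbrev disk (n : ℤ) (A : 𝒢) : CochainComplex 𝒢 ℤ :=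
  double (𝟙 A) (show (ComplexShape.up ℤ).Rel n (n + 1) from rfl)

/-- The inclusion of a sphere as the cycles of a disk. -/
noncomputable def sphereToDisk (n : ℤ) (A : 𝒢) : sphere (n + 1) A ⟶ disk n A :=
  mkHomFromSingle (doubleXIso₁ (𝟙 A) rfl (by simp)).inv
    (fun k _ => by rw [double_d_eq_zero₀ _ _ _ _ (by simp), comp_zero])

/-- The projection of a disk onto its quotient by the cycles. -/
noncomputable def diskToSphere (n : ℤ) (A : 𝒢) : disk n A ⟶ sphere n A :=
  mkHomFromDouble _ (by simp) (singleObjXSelf (ComplexShape.up ℤ) n A).inv 0 (by simp) (by simp)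

lemma IsShortExact.of_isZero_left {A B D : 𝒢} (i : A ⟶ B) (p : B ⟶ D) (hA : IsZero A)
    [IsIso p] : IsShortExact i p := by
  have : Mono i := ⟨fun _ _ _ => hA.eq_of_tgt _ _⟩
  exact .of_exists_desc (hA.eq_of_src _ _) fun k _ => ⟨inv p ≫ k, IsIso.hom_inv_id_assoc p k⟩

lemma IsShortExact.of_isZero_right {A B D : 𝒢} (i : A ⟶ B) (p : B ⟶ D) (hD : IsZero D)
    [IsIso i] : IsShortExact i p := by
  have : Epi p := ⟨fun _ _ _ => hD.eq_of_src _ _⟩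
  exact .of_exists_lift (hD.eq_of_tgt _ _) fun k _ =>
    ⟨k ≫ inv i, by rw [Category.assoc, IsIso.inv_hom_id, Category.comp_id]⟩

lemma isShortExact_sphereToDisk_diskToSphere (n : ℤ) (A : 𝒢) :
    IsShortExact (sphereToDisk n A) (diskToSphere n A) := by
  refine .of_eval fun k => ?_
  by_cases h₁ : k = n + 1
  · subst h₁
    have : IsIso ((sphereToDisk n A).f (n + 1)) := by
      simp only [sphereToDisk, mkHomFromSingle_f]; infer_instance
    exact .of_isZero_right _ _ (isZero_single_obj_X _ _ _ _ (by simp))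
  have hz := isZero_single_obj_X (ComplexShape.up ℤ) (n + 1) A k h₁
  by_cases h₀ : k = n
  · subst h₀
    have : IsIso ((diskToSphere k A).f k) := by
      simp only [diskToSphere, mkHomFromDouble_f₀]; infer_instance
    exact .of_isZero_left _ _ hz
  · have : IsIso ((diskToSphere n A).f k) :=
      (isZero_double_X _ _ k h₀ h₁).isIso (isZero_single_obj_X _ _ _ _ h₀) _
    exact .of_isZero_left _ _ hz

lemma exists_comp_d_eq_of_sphere_extension {X : CochainComplex 𝒢 ℤ} {n : ℤ} {A : 𝒢}
    (h : ∀ f : sphere (n + 1) A ⟶ X, ∃ g, sphereToDisk n A ≫ g = f) (x : A ⟶ X.X (n + 1))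
    (hx : x ≫ X.d (n + 1) (n + 1 + 1) = 0) : ∃ y : A ⟶ X.X n, y ≫ X.d n (n + 1) = x := by
  obtain ⟨g, hg⟩ := h (mkHomFromSingle x (by rintro k rfl; exact hx))
  have hg' := congr_hom hg (n + 1)
  simp only [comp_f, sphereToDisk, mkHomFromSingle_f, Category.assoc,
    Iso.cancel_iso_hom_left] at hg'
  refine ⟨(doubleXIso₀ (𝟙 A) rfl).inv ≫ g.f n, ?_⟩
  rw [Category.assoc, g.comm, double_d _ _ (by simp), Category.assoc, Category.assoc,
    Category.id_comp, hg', Iso.inv_hom_id_assoc]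

lemma exists_d_comp_eq_of_sphere_lift {P : CochainComplex 𝒢 ℤ} {n : ℤ} {A : 𝒢}
    (h : ∀ f : P ⟶ sphere n A, ∃ g, g ≫ diskToSphere n A = f) (x : P.X n ⟶ A)
    (hx : ∀ k, P.d k n ≫ x = 0) : ∃ y : P.X (n + 1) ⟶ A, P.d n (n + 1) ≫ y = x := by
  obtain ⟨g, hg⟩ := h (mkHomToSingle x fun k _ => hx k)
  have hg' := congr_hom hg n
  simp only [comp_f, diskToSphere, mkHomToSingle_f, mkHomFromDouble_f₀, ← Category.assoc,
    Iso.cancel_iso_inv_right] at hg'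
  refine ⟨g.f (n + 1) ≫ (doubleXIso₁ (𝟙 A) rfl (by simp)).hom, ?_⟩
  rw [← g.comm_assoc, double_d _ _ (by simp), Category.id_comp, Category.assoc, Iso.inv_hom_id,
    Category.comp_id, hg']

lemma Ext1Zero.sphere_left_of_mem_tilde {𝓑 : Set 𝒢} {A : 𝒢} (hA : ∀ B ∈ 𝓑, Ext1Zero A B) (n : ℤ)
    {V : CochainComplex 𝒢 ℤ} (hV : V ∈ Tilde 𝓑) : Ext1Zero (sphere n A) V :=
  of_exists_section fun {E i p} hs => by
    let a : A ⟶ (sphere n A).cycles n := liftCycles _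
      (singleObjXSelf (ComplexShape.up ℤ) n A).inv (n + 1) (by simp) (by simp)
    obtain ⟨l, hl⟩ := (hA _ (Tilde.cycles_mem hV n)).exists_lift_of_shortExact
      (hs.cyclesMap (Tilde.acyclic hV) n) a
    have hl' := hl =≫ iCycles _ _
    simp only [Category.assoc, cyclesMap_i, a, liftCycles_i] at hl'
    refine ⟨mkHomFromSingle (l ≫ E.iCycles n) (by simp), ?_⟩
    ext
    simp [hl']

lemma IsShortExact.mono_comp_pOpcycles {X M E : CochainComplex 𝒢 ℤ} {i : X ⟶ M} {p : M ⟶ E}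
    (h : IsShortExact i p) (hE : E.Acyclic) (hX : ∀ j k, X.d j k = 0) (n : ℤ) :
    Mono (i.f n ≫ M.pOpcycles n) := by
  have := X.isIso_pOpcycles (n - 1) n (by simp) (hX _ _)
  have := X.isIso_homologyι n (n + 1) (by simp) (hX _ _)
  have hmono : Mono (homologyMap i n) :=
    (h.shortExact.homology_exact₁ (n - 1) n (by simp)).mono_g
      ((hE (n - 1)).isZero_homology.eq_of_src _ _)
  have heq : i.f n ≫ M.pOpcycles n =
      X.pOpcycles n ≫ inv (X.homologyι n) ≫ homologyMap i n ≫ M.homologyι n := by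
    rw [homologyι_naturality, IsIso.inv_hom_id_assoc, p_opcyclesMap]
  rw [heq]
  infer_instance

lemma Ext1Zero.sphere_right_of_acyclic {E : CochainComplex 𝒢 ℤ} (hE : E.Acyclic) (n : ℤ) (Q : 𝒢)
    [Injective Q] : Ext1Zero E (sphere n Q) :=
  of_exists_retraction fun {M i p} hs => by
    have := hs.mono_comp_pOpcycles hE (fun _ _ => rfl) n
    let s := singleObjXSelf (ComplexShape.up ℤ) n Q
    refine ⟨mkHomToSingle (M.pOpcycles n ≫ Injective.factorThru s.hom (i.f n ≫ M.pOpcycles n))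
      (by simp), ?_⟩
    ext
    have hr := Injective.comp_factorThru s.hom (i.f n ≫ M.pOpcycles n)
    rw [Category.assoc] at hr
    rw [comp_f, mkHomToSingle_f, Category.assoc, reassoc_of% hr, Iso.hom_inv_id, id_f]

lemma exactAt_of_comp_pOpcycles_eq_zero {X : CochainComplex 𝒢 ℤ} {n : ℤ}
    (h : ∀ (T : 𝒢) (x : T ⟶ X.X n), x ≫ X.d n (n + 1) = 0 → x ≫ X.pOpcycles n = 0) :
    X.ExactAt n := by
  rw [X.exactAt_iff_exact_up_to_refinements (n - 1) n (n + 1) (by simp) (by simp)]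
  intro T x hx
  rw [← X.comp_pOpcycles_eq_zero_iff_up_to_refinements x (n - 1) (by simp)]
  exact h T x hx

lemma acyclic_of_ext1Zero_sphere [EnoughInjectives 𝒢] {P : CochainComplex 𝒢 ℤ}
    (h : ∀ (m : ℤ) (Q : 𝒢) [Injective Q], Ext1Zero P (sphere m Q)) : P.Acyclic := by
  refine fun n => exactAt_of_comp_pOpcycles_eq_zero fun T x hx => ?_
  obtain ⟨y, hy⟩ := exists_d_comp_eq_of_sphere_lift
    ((h (n + 1) _).exists_lift_of_shortExact (isShortExact_sphereToDisk_diskToSphere n _))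
    (P.pOpcycles n ≫ Injective.ι _) (by simp)
  rw [← cancel_mono (Injective.ι _), zero_comp, Category.assoc, ← hy, reassoc_of% hx, zero_comp]

lemma IsCompleteCotorsionPair.exists_isShortExact_acyclic [IsGrothendieckAbelian.{v} 𝒢]
    {𝓐 𝓑 : Set 𝒢} (hpair : IsCompleteCotorsionPair 𝓐 𝓑) (X : CochainComplex 𝒢 ℤ) :
    ∃ (E P : CochainComplex 𝒢 ℤ) (i : X ⟶ E) (p : E ⟶ P),
      IsShortExact i p ∧ E.Acyclic ∧ P ∈ leftPerp (Tilde 𝓑) := by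
  obtain ⟨_, A, _, a, _, ha, _, hA⟩ := hpair.approx₂ (separator 𝒢)
  have : Epi a := ha.epi_g
  let W := MorphismProperty.ofHoms fun n : ℤ => sphereToDisk n A
  have hW : W ≤ .monomorphisms _ := by
    rintro _ _ _ ⟨n⟩
    exact (isShortExact_sphereToDisk_diskToSphere n A).mono
  have : MorphismProperty.IsSmall.{v} W := MorphismProperty.isSmall_ofHoms _
  obtain ⟨E, P, i, p, hs, hE, hP⟩ := exists_isShortExact_of_isSmall hW X
  refine ⟨E, P, i, p, hs, acyclic_of_exactAt_succ fun n => exactAt_of_comp_pOpcycles_eq_zero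
    fun T x hx => (Preadditive.isSeparator_iff _).1 (isSeparator_separator 𝒢) _ fun g => ?_,
    fun V hV => hP V ?_⟩
  · obtain ⟨y, hy⟩ := exists_comp_d_eq_of_sphere_extension (hE _ ⟨n⟩) (a ≫ g ≫ x) (by simp [hx])
    rw [← cancel_epi a, comp_zero, reassoc_of% hy.symm, d_pOpcycles, comp_zero]
  · rintro _ _ _ ⟨n⟩
    have hs := isShortExact_sphereToDisk_diskToSphere n A
    have := hs.mono
    obtain ⟨e⟩ := hs.nonempty_iso (.cokernel_π _) (.refl _) (Category.comp_id _)
    exact (Ext1Zero.sphere_left_of_mem_tilde (fun B => hpair.ext1Zero hA) n hV).of_iso_left e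

end Spheres

/-! ### Local arguments in filtered colimits -/

section FilteredColimits

variable {C : Type u} [Category.{v} C] {D : Type w} [Category.{v} D] [Abelian D]
  [IsGrothendieckAbelian.{v} D]

open IsGrothendieckAbelian.IsPresentable in
lemma eq_zero_of_isColimit {J : Type v} [SmallCategory J] [IsFiltered J] {F : J ⥤ C} (Φ : C ⥤ D)
    [PreservesColimit F Φ] {c : Cocone F} (hc : IsColimit c) {T W : D} (x : T ⟶ Φ.obj c.pt)
    (g : T ⟶ W) (h : ∀ (j : J) (S : D) (s : S ⟶ T) (y : S ⟶ Φ.obj (F.obj j)),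
      s ≫ x = y ≫ Φ.map (c.ι.app j) → s ≫ g = 0) : g = 0 := by
  let c' := Φ.mapCocone c
  have : Epi (surjectivity.f (c := c') x) :=
    surjectivity.epi_f (isColimitOfPreserves Φ hc) x
  rw [← cancel_epi (surjectivity.f (c := c') x), comp_zero]
  refine colimit.hom_ext fun j => ?_
  rw [← Category.assoc, surjectivity.hf, comp_zero]
  refine h j _ _ ((pullback.fst c'.ι ((Functor.const J).map x)).app j) ?_
  exact (congr_app (pullback.condition (f := c'.ι) (g := (Functor.const J).map x)) j).symm

variable [Abelian C] [IsGrothendieckAbelian.{v} C] {X : C} {T W : D}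

lemma eq_zero_of_eq_iSup (Φ : C ⥤ D) [PreservesFilteredColimitsOfSize.{v, v} Φ] {J : Type v}
    [Preorder J] [IsDirectedOrder J] [Nonempty J] {V : J → Subobject X} (hV : Monotone V)
    {N : Subobject X} (hN : N = ⨆ j, V j) (x : T ⟶ Φ.obj N) (g : T ⟶ W)
    (h : ∀ (j : J) (hj : V j ≤ N) (S : D) (s : S ⟶ T) (y : S ⟶ Φ.obj (V j)),
      s ≫ x = y ≫ Φ.map ((V j).ofLE N hj) → s ≫ g = 0) : g = 0 := by
  have hle : ∀ j, V j ≤ N := fun j => hN ▸ le_iSup V j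
  let F := hV.functor ⋙ Subobject.representative
  let c : Cocone (F ⋙ MonoOver.forget X) :=
    { pt := Over.mk N.arrow
      ι :=
        { app := fun j => Over.homMk ((V j).ofLE N (hle j)) (Subobject.ofLE_arrow _)
          naturality := fun j k f => by
            ext
            exact (cancel_mono N.arrow).1 ((Over.w _).trans (Over.w _).symm) } }
  have : Mono c.pt.hom := inferInstanceAs (Mono N.arrow)
  have hc := IsGrothendieckAbelian.isColimitMapCoconeOfSubobjectMkEqISup F c
    (by simpa [c, F] using hN)
  exact eq_zero_of_isColimit Φ hc x g fun j => h j (hle j)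

lemma eq_zero_of_sSup (Φ : C ⥤ D) [PreservesFilteredColimitsOfSize.{v, v} Φ]
    {𝒮 : Set (Subobject X)} (hne : 𝒮.Nonempty) (hdir : DirectedOn (· ≤ ·) 𝒮)
    (x : T ⟶ Φ.obj (sSup 𝒮 :)) (g : T ⟶ W)
    (h : ∀ V ∈ 𝒮, ∀ (hV : V ≤ sSup 𝒮) (S : D) (s : S ⟶ T) (y : S ⟶ Φ.obj V),
      s ≫ x = y ≫ Φ.map (V.ofLE (sSup 𝒮) hV) → s ≫ g = 0) : g = 0 := by
  let e : Shrink.{v} 𝒮 ≃o 𝒮 := (orderIsoShrink 𝒮).symm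
  have : Nonempty (Shrink.{v} 𝒮) := ⟨e.symm ⟨_, hne.some_mem⟩⟩
  have : IsDirectedOrder (Shrink.{v} 𝒮) := ⟨fun a b => by
    obtain ⟨V, hV, hVa, hVb⟩ := hdir _ (e a).2 _ (e b).2
    exact ⟨e.symm ⟨V, hV⟩, (e.le_symm_apply).2 hVa, (e.le_symm_apply).2 hVb⟩⟩
  refine eq_zero_of_eq_iSup Φ (V := fun j => (e j).1) (fun _ _ hjk => e.monotone hjk) ?_ x g
    fun j => h _ (e j).2
  rw [sSup_eq_iSup', ← e.toEquiv.iSup_comp]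
  rfl

end FilteredColimits

/-! ### Small acyclic subcomplexes through which an epimorphism lifts -/

section Cover

variable {C : Type u} [Category.{v} C] [Abelian C]

lemma comp_eq_zero_of_imageSubobject_le {A B X Y Z : C} {a : A ⟶ Y} {b : B ⟶ Y} {ι : Y ⟶ X}
    [Mono ι] (h : imageSubobject (b ≫ ι) ≤ imageSubobject (a ≫ ι)) {q : Y ⟶ Z}
    (ha : a ≫ q = 0) : b ≫ q = 0 := by
  have hle : imageSubobject (b ≫ ι) ≤ Subobject.mk (kernel.ι q ≫ ι) :=
    h.trans (imageSubobject_le_mk _ _ (kernel.lift q a ha) (kernel.lift_ι_assoc q a ha ι))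
  have hb : b = factorThruImageSubobject (b ≫ ι) ≫ Subobject.ofLEMk _ _ hle ≫ kernel.ι q := by
    rw [← cancel_mono ι, Category.assoc, Category.assoc, Subobject.ofLEMk_comp,
      imageSubobject_arrow_comp]
  rw [hb, Category.assoc, Category.assoc, kernel.condition, comp_zero, comp_zero]

variable [IsGrothendieckAbelian.{v} C]

lemma exists_epi_comp_of_mono (X : C) : ∃ T : C, ∀ ⦃P Y : C⦄ (f : P ⟶ Y) [Epi f] (ι : Y ⟶ X)
    [Mono ι], ∃ x : T ⟶ P, Epi (x ≫ f) := by
  classical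
  let S := separator C
  refine ⟨∐ fun _ : Shrink.{v} (Subobject X) => S, fun P Y f _ ι _ => ?_⟩
  let σ (V : Subobject X) : S ⟶ P :=
    if h : ∃ x : S ⟶ P, imageSubobject ((x ≫ f) ≫ ι) = V then h.choose else 0
  let x := Sigma.desc fun V => σ ((equivShrink _).symm V)
  refine ⟨x, Preadditive.epi_of_cancel_zero _ fun {Z} q hq => ?_⟩
  rw [← cancel_epi f, comp_zero]
  refine (Preadditive.isSeparator_iff _).1 (isSeparator_separator C) _ fun s => ?_
  let V := imageSubobject ((s ≫ f) ≫ ι)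
  have hσ : imageSubobject ((σ V ≫ f) ≫ ι) = V := by
    have hs : ∃ x : S ⟶ P, imageSubobject ((x ≫ f) ≫ ι) = V := ⟨s, rfl⟩
    simpa only [σ, dif_pos hs] using hs.choose_spec
  have hσq : (σ V ≫ f) ≫ q = 0 := by
    simpa [x] using Sigma.ι _ (equivShrink _ V) ≫= hq
  rw [← Category.assoc]
  exact comp_eq_zero_of_imageSubobject_le hσ.ge hσq

lemma exists_refinement_factors_epi (H : C) : ∃ T : C, ∀ ⦃P Z E : C⦄ (f : P ⟶ Z) [Epi f]
    (ι : Z ⟶ E) [Mono ι] (c : H ⟶ E), ∃ w : T ⟶ P, ∀ ⦃S : C⦄ (z : S ⟶ H) (l : S ⟶ Z),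
      z ≫ c = l ≫ ι → ∃ (S' : C) (π : S' ⟶ S) (_ : Epi π) (y : S' ⟶ T), π ≫ l = y ≫ w ≫ f := by
  obtain ⟨T, hT⟩ := exists_epi_comp_of_mono H
  refine ⟨T, fun P Z E f _ ι _ c => ?_⟩
  obtain ⟨x, _⟩ := hT (pullback.fst (pullback.snd c ι) f) (pullback.fst c ι)
  refine ⟨x ≫ pullback.snd _ _, fun S z l h => ?_⟩
  obtain ⟨S', π, hπ, y, hy⟩ := surjective_up_to_refinements_of_epi
    (x ≫ pullback.fst (pullback.snd c ι) f) (pullback.lift z l h)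
  refine ⟨S', π, hπ, y, ?_⟩
  simpa only [Category.assoc, pullback.lift_snd, pullback.condition] using
    hy =≫ pullback.snd c ι

end Cover

lemma exists_desc_sequence {C : Type u} [Category.{v} C] [HasFilteredColimitsOfSize.{w, w} C]
    {G : ℕ → C} (j : ∀ k, G k ⟶ G (k + 1)) {M : C} (a : ∀ k, G k ⟶ M)
    (ha : ∀ k, j k ≫ a (k + 1) = a k) :
    ∃ α : colimit ((AsSmall.down : AsSmall.{w} ℕ ⥤ ℕ) ⋙ Functor.ofSequence j) ⟶ M,
      ∀ k, colimit.ι _ ⟨k⟩ ≫ α = a k := by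
  let τ : Functor.ofSequence j ⟶ (Functor.const ℕ).obj M :=
    NatTrans.ofSequence a fun k => by
      rw [Functor.ofSequence_map_homOfLE_succ]
      exact (ha k).trans (Category.comp_id _).symm
  exact ⟨colimit.desc _ ⟨M, AsSmall.down.whiskerLeft τ⟩, fun k =>
    colimit.ι_desc (Cocone.mk M _) _⟩

section BoundsCycles

open HomologicalComplex

/-- `b' : G' ⟶ E` bounds the cycles of `b : G ⟶ E` if every cycle of `E` in the image of `b`
becomes, after an epimorphic refinement, the boundary of an element in the image of `b'`. -/
def BoundsCycles {G G' E : CochainComplex 𝒢 ℤ} (b : G ⟶ E) (b' : G' ⟶ E) : Prop :=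
  ∀ (n : ℤ) ⦃S : 𝒢⦄ (z : S ⟶ G.X (n + 1)), z ≫ b.f (n + 1) ≫ E.d (n + 1) (n + 1 + 1) = 0 →
    ∃ (S' : 𝒢) (π : S' ⟶ S) (_ : Epi π) (y : S' ⟶ G'.X n),
      π ≫ z ≫ b.f (n + 1) = y ≫ b'.f n ≫ E.d n (n + 1)

lemma exists_hom_from_disk {X : CochainComplex 𝒢 ℤ} {n : ℤ} {A : 𝒢} (x : A ⟶ X.X n) :
    ∃ φ : disk n A ⟶ X, (doubleXIso₀ (𝟙 A) rfl).inv ≫ φ.f n = x :=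
  ⟨mkHomFromDouble _ (by simp) x (x ≫ X.d n (n + 1)) (by simp) (by simp), by simp⟩

lemma BoundsCycles.of_comp_mono {G G' Y E : CochainComplex 𝒢 ℤ} {f : G ⟶ Y} {g : G' ⟶ Y}
    (b : Y ⟶ E) [Mono b] (h : BoundsCycles (f ≫ b) (g ≫ b)) : BoundsCycles f g := by
  intro n S z hz
  obtain ⟨S', π, hπ, y, hy⟩ := h n z (by
    rw [comp_f, Category.assoc, b.comm, reassoc_of% hz, zero_comp])
  refine ⟨S', π, hπ, y, ?_⟩
  rw [← cancel_mono (b.f (n + 1))]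
  simpa only [comp_f, Category.assoc, b.comm] using hy

variable [IsGrothendieckAbelian.{v} 𝒢]

lemma exists_boundsCycles (G : CochainComplex 𝒢 ℤ) : ∃ (G' : CochainComplex 𝒢 ℤ) (j : G ⟶ G'),
    ∀ ⦃M E : CochainComplex 𝒢 ℤ⦄ (_ : E.Acyclic) (p : M ⟶ E) [Epi p] (a : G ⟶ M),
      ∃ a' : G' ⟶ M, j ≫ a' = a ∧ BoundsCycles (a ≫ p) (a' ≫ p) := by
  choose T hT using fun n : ℤ => exists_refinement_factors_epi (G.X (n + 1))
  let D := ∐ fun n : ULift.{v} ℤ => disk n.down (T n.down)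
  refine ⟨G ⨿ D, coprod.inl, fun M E hE p _ a => ?_⟩
  have (n : ℤ) := (isShortExact_cycles hE n).epi
  choose w hw using fun n => hT n (p.f n ≫ E.toCycles n (n + 1)) (E.iCycles (n + 1))
    ((a ≫ p).f (n + 1))
  choose φ hφ using fun n => exists_hom_from_disk (w n)
  let a' : G ⨿ D ⟶ M := coprod.desc a (Sigma.desc fun n => φ n.down)
  refine ⟨a', coprod.inl_desc _ _, fun n S z hz => ?_⟩
  obtain ⟨S', π, hπ, y, hy⟩ := hw n z (E.liftCycles (z ≫ (a ≫ p).f (n + 1)) (n + 1 + 1)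
    (by simp) (by rwa [Category.assoc])) (E.liftCycles_i _ _ _ _).symm
  obtain ⟨ι, hι⟩ : ∃ ι : T n ⟶ (G ⨿ D).X n, ι ≫ a'.f n = w n := by
    refine ⟨(doubleXIso₀ (𝟙 (T n)) rfl).inv ≫
      (Sigma.ι (fun n : ULift.{v} ℤ => disk n.down (T n.down)) ⟨n⟩ ≫ coprod.inr).f n, ?_⟩
    rw [Category.assoc, ← comp_f, Category.assoc, coprod.inr_desc, Sigma.ι_desc, hφ]
  refine ⟨S', π, hπ, y ≫ ι, ?_⟩
  have hy' := hy =≫ E.iCycles (n + 1)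
  simp only [Category.assoc, liftCycles_i, toCycles_i] at hy'
  rw [hy', comp_f, Category.assoc, Category.assoc, reassoc_of% hι]

lemma acyclic_of_boundsCycles {J : Type v} [SmallCategory J] [IsFiltered J]
    {F : J ⥤ CochainComplex 𝒢 ℤ} {c : Cocone F} (hc : IsColimit c) {Y : CochainComplex 𝒢 ℤ}
    (π : c.pt ⟶ Y) [Epi π] (h : ∀ j, ∃ k, BoundsCycles (c.ι.app j ≫ π) (c.ι.app k ≫ π)) :
    Y.Acyclic := by
  refine acyclic_of_exactAt_succ fun n => exactAt_of_comp_pOpcycles_eq_zero fun T x hx => ?_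
  obtain ⟨T', ρ, _, x', hx'⟩ := surjective_up_to_refinements_of_epi (π.f (n + 1)) x
  rw [← cancel_epi ρ, comp_zero]
  refine eq_zero_of_isColimit (eval 𝒢 _ (n + 1)) hc x' _
    fun j S s (y : S ⟶ (F.obj j).X (n + 1)) (hy : s ≫ x' = y ≫ (c.ι.app j).f (n + 1)) => ?_
  have hy' : s ≫ ρ ≫ x = y ≫ (c.ι.app j ≫ π).f (n + 1) := by
    rw [hx', reassoc_of% hy, comp_f]
  obtain ⟨k, hk⟩ := h j
  obtain ⟨S', σ, _, w, hw⟩ := hk n y (by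
    rw [← Category.assoc, ← hy', Category.assoc, Category.assoc, hx, comp_zero, comp_zero])
  rw [← hy', ← Category.assoc w] at hw
  rw [← cancel_epi σ, comp_zero]
  simpa only [Category.assoc, d_pOpcycles, comp_zero] using hw =≫ Y.pOpcycles (n + 1)

lemma exists_acyclic_image_lift : ∃ G : CochainComplex 𝒢 ℤ,
    ∀ ⦃M E : CochainComplex 𝒢 ℤ⦄ (_ : E.Acyclic) (_ : ¬ IsZero E) (p : M ⟶ E) [Epi p],
      ∃ (Y : CochainComplex 𝒢 ℤ) (a : G ⟶ M) (π : G ⟶ Y) (b : Y ⟶ E),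
        Y.Acyclic ∧ ¬ IsZero Y ∧ Epi π ∧ Mono b ∧ π ≫ b = a ≫ p := by
  -- Each enlargement bounds the cycles of the previous stage, so the image of the union is acyclic.
  choose N j hN using exists_boundsCycles (𝒢 := 𝒢)
  let G (k : ℕ) : CochainComplex 𝒢 ℤ := Nat.rec (separator _) (fun _ => N) k
  refine ⟨colimit ((AsSmall.down : AsSmall.{v} ℕ ⥤ ℕ) ⋙ Functor.ofSequence fun k => j (G k)),
    fun M E hE hE₀ p _ => ?_⟩
  obtain ⟨f, hf⟩ : ∃ f : separator _ ⟶ M, f ≫ p ≠ 0 := by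
    by_contra! h
    exact hE₀ ((IsZero.iff_id_eq_zero _).2 ((cancel_epi p).1 (by
      simpa using (Preadditive.isSeparator_iff _).1 (isSeparator_separator _) p h)))
  choose ext hext hbounds using fun G => hN G hE p
  let a (k : ℕ) : G k ⟶ M := Nat.rec f (fun k => ext (G k)) k
  obtain ⟨α, hα⟩ := exists_desc_sequence (fun k => j (G k)) a fun k => hext _ _
  let y := image.ι (α ≫ p)
  have hfac : ∀ k, (colimit.ι _ ⟨k⟩ ≫ factorThruImage (α ≫ p)) ≫ y = a k ≫ p := fun k => by
    rw [Category.assoc, image.fac, reassoc_of% hα]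
    rfl
  refine ⟨image (α ≫ p), α, factorThruImage (α ≫ p), y, ?_, fun hY => hf ?_, inferInstance,
    inferInstance, image.fac _⟩
  · refine acyclic_of_boundsCycles (colimit.isColimit _) (factorThruImage (α ≫ p)) fun ⟨k⟩ =>
      ⟨⟨k + 1⟩, .of_comp_mono y ?_⟩
    exact (hfac k).symm ▸ (hfac (k + 1)).symm ▸ hbounds _ _
  · exact (hfac 0).symm.trans ((hY.eq_of_tgt _ 0 =≫ y).trans zero_comp)

end BoundsCycles

/-! ### Extensions of acyclic complexes -/

section Lifting

variable {C : Type u} [Category.{v} C] [Abelian C]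

lemma IsShortExact.exists_lift_of_exists_extension {I M E K G Y : C} {i : I ⟶ M} {p : M ⟶ E}
    {k : K ⟶ G} {π : G ⟶ Y} (hM : IsShortExact i p) (hG : IsShortExact k π)
    (hext : ∀ f : K ⟶ I, ∃ g, k ≫ g = f) {a : G ⟶ M} {b : Y ⟶ E} (h : π ≫ b = a ≫ p) :
    ∃ t : Y ⟶ M, t ≫ p = b := by
  obtain ⟨f, hf⟩ := hM.exists_lift (k ≫ a) (by
    rw [Category.assoc, ← h, reassoc_of% hG.comp_eq_zero, zero_comp])
  obtain ⟨g, rfl⟩ := hext f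
  obtain ⟨t, ht⟩ := hG.exists_desc (a - g ≫ i) (by
    rw [Preadditive.comp_sub, ← hf, Category.assoc, sub_self])
  have := hG.epi
  refine ⟨t, ?_⟩
  rw [← cancel_epi π, reassoc_of% ht, Preadditive.sub_comp, Category.assoc, hM.comp_eq_zero,
    comp_zero, sub_zero, h]

lemma IsShortExact.mono_fst_comp {N P X Y Z E E' : C} {n : N ⟶ X} {g : X ⟶ Z} {q : Y ⟶ Z}
    {fst : P ⟶ X} {snd : P ⟶ Y} (h : IsShortExact n g) (sq : IsPullback fst snd g q) {p : X ⟶ E}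
    {c : E ⟶ E'} {d : Z ⟶ E'} (hd : g ≫ d = p ≫ c) [Mono (n ≫ p)] [Mono (q ≫ d)] :
    Mono (fst ≫ p) := by
  obtain ⟨n', hn', hP⟩ := of_isPullback sq h
  refine Preadditive.mono_of_cancel_zero _ fun x hx => ?_
  have hsnd : x ≫ snd = 0 := by
    rw [← cancel_mono (q ≫ d), zero_comp, Category.assoc, ← sq.w_assoc, hd,
      reassoc_of% hx, zero_comp]
  obtain ⟨l, rfl⟩ := hP.exists_lift x hsnd
  have hl : l = 0 := by
    rw [← cancel_mono (n ≫ p), zero_comp, ← hn', ← hx, Category.assoc, Category.assoc]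
  rw [hl, zero_comp]

end Lifting

section AcyclicExtensions

open HomologicalComplex

variable [IsGrothendieckAbelian.{v} 𝒢]

instance (n : ℤ) : PreservesFilteredColimitsOfSize.{v, v} (eval 𝒢 (ComplexShape.up ℤ) n) :=
  ⟨fun _ _ _ => inferInstance⟩

lemma acyclic_sSup {M : CochainComplex 𝒢 ℤ} {𝒮 : Set (Subobject M)} (hne : 𝒮.Nonempty)
    (hdir : DirectedOn (· ≤ ·) 𝒮) (h : ∀ V ∈ 𝒮, (V : CochainComplex 𝒢 ℤ).Acyclic) :
    ((sSup 𝒮 : Subobject M) : CochainComplex 𝒢 ℤ).Acyclic := by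
  refine acyclic_of_exactAt_succ fun n => exactAt_of_comp_pOpcycles_eq_zero fun T x hx =>
    eq_zero_of_sSup (eval 𝒢 _ (n + 1)) hne hdir x _
      fun V hV hle S s (y : S ⟶ (V : CochainComplex 𝒢 ℤ).X (n + 1))
        (hy : s ≫ x = y ≫ (V.ofLE _ hle).f (n + 1)) => ?_
  obtain ⟨S', σ, _, w, hw⟩ := (exactAt_succ_iff_up_to_refinements _ n).1 (h V hV (n + 1)) y (by
    rw [← cancel_mono ((V.ofLE _ hle).f (n + 1 + 1)), Category.assoc, ← Hom.comm,
      ← reassoc_of% hy, hx, comp_zero, zero_comp])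
  rw [← cancel_epi σ, comp_zero, reassoc_of% hy, reassoc_of% hw, ← Hom.comm_assoc, d_pOpcycles,
    comp_zero, comp_zero]

lemma mono_sSup_arrow_comp {M E : CochainComplex 𝒢 ℤ} (p : M ⟶ E) {𝒮 : Set (Subobject M)}
    (hne : 𝒮.Nonempty) (hdir : DirectedOn (· ≤ ·) 𝒮) (h : ∀ V ∈ 𝒮, Mono (V.arrow ≫ p)) :
    Mono ((sSup 𝒮).arrow ≫ p) := by
  have (n : ℤ) : Mono (((sSup 𝒮).arrow ≫ p).f n) :=
    Preadditive.mono_of_cancel_zero _ fun {T} x hx =>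
      eq_zero_of_sSup (eval 𝒢 _ n) hne hdir x x
        fun V hV hle S s (y : S ⟶ (V : CochainComplex 𝒢 ℤ).X n)
          (hy : s ≫ x = y ≫ (V.ofLE _ hle).f n) => by
      have := h V hV
      have hy₀ : y = 0 := by
        rw [← cancel_mono ((V.arrow ≫ p).f n), zero_comp, ← Subobject.ofLE_arrow hle,
          Category.assoc, comp_f, ← reassoc_of% hy, hx, comp_zero]
      rw [hy, hy₀, zero_comp]
  exact mono_of_mono_f _ this

lemma exists_maximal_acyclic_mono {M E : CochainComplex 𝒢 ℤ} (p : M ⟶ E) : ∃ N : Subobject M,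
    Maximal (fun N : Subobject M => (N : CochainComplex 𝒢 ℤ).Acyclic ∧ Mono (N.arrow ≫ p)) N := by
  have h₀ : IsZero ((⊥ : Subobject M) : CochainComplex 𝒢 ℤ) :=
    (isZero_zero _).of_iso Subobject.botCoeIsoZero
  obtain ⟨N, -, hN⟩ := zorn_le_nonempty₀
    {N : Subobject M | (N : CochainComplex 𝒢 ℤ).Acyclic ∧ Mono (N.arrow ≫ p)}
    (fun 𝒮 h𝒮 hchain V hV => ⟨sSup 𝒮,
      ⟨acyclic_sSup ⟨V, hV⟩ hchain.directedOn fun _ hW => (h𝒮 hW).1,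
        mono_sSup_arrow_comp p ⟨V, hV⟩ hchain.directedOn fun _ hW => (h𝒮 hW).2⟩,
      fun _ => le_sSup⟩) ⊥
    ⟨fun n => .of_isZero ((eval 𝒢 _ n).map_isZero h₀), ⟨fun _ _ _ => h₀.eq_of_tgt _ _⟩⟩
  exact ⟨N, hN⟩

lemma isZero_of_maximal_acyclic_mono {M E E' Y : CochainComplex 𝒢 ℤ} {p : M ⟶ E} {N : Subobject M}
    (hN : Maximal (fun N : Subobject M => (N : CochainComplex 𝒢 ℤ).Acyclic ∧ Mono (N.arrow ≫ p)) N)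
    {d : cokernel N.arrow ⟶ E'} {c : E ⟶ E'} (hd : cokernel.π N.arrow ≫ d = p ≫ c)
    (hY : Y.Acyclic) (t : Y ⟶ cokernel N.arrow) [Mono (t ≫ d)] : IsZero Y := by
  have := hN.prop.2
  have : Mono t := mono_of_mono t d
  have hs : IsShortExact N.arrow (cokernel.π N.arrow) := .cokernel_π _
  have sq := IsPullback.of_hasPullback (cokernel.π N.arrow) t
  obtain ⟨n, hn, hP⟩ := IsShortExact.of_isPullback sq hs
  have hmono : Mono (pullback.fst (cokernel.π N.arrow) t ≫ p) :=
    hs.mono_fst_comp sq hd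
  have hle : Subobject.mk (pullback.fst (cokernel.π N.arrow) t) ≤ N := by
    refine hN.le_of_ge ⟨fun i => ?_, ?_⟩ (Subobject.le_mk_of_comm n hn)
    · exact (hP.acyclic_mid hN.prop.1 hY i).of_iso (Subobject.underlyingIso _).symm
    · rw [← Subobject.underlyingIso_hom_comp_eq_mk, Category.assoc]
      infer_instance
  have hsnd : pullback.snd (cokernel.π N.arrow) t = 0 := by
    rw [← cancel_mono t, ← pullback.condition, ← Subobject.ofMkLE_arrow hle, Category.assoc,
      cokernel.condition, comp_zero, zero_comp]
  have := hP.epi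
  rw [IsZero.iff_id_eq_zero, ← cancel_epi (pullback.snd (cokernel.π N.arrow) t), hsnd, zero_comp,
    zero_comp]

lemma ext1Zero_of_exists_acyclic_lift {I : CochainComplex 𝒢 ℤ}
    (h : ∀ ⦃M E : CochainComplex 𝒢 ℤ⦄ (i : I ⟶ M) (p : M ⟶ E), IsShortExact i p → E.Acyclic →
      ¬ IsZero E → ∃ (Y : CochainComplex 𝒢 ℤ) (t : Y ⟶ M), Y.Acyclic ∧ ¬ IsZero Y ∧ Mono (t ≫ p))
    {E : CochainComplex 𝒢 ℤ} (hE : E.Acyclic) : Ext1Zero E I := by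
  refine .of_exists_section fun {M i p} hs => ?_
  obtain ⟨N, hN⟩ := exists_maximal_acyclic_mono p
  have := hN.prop.2
  have hQ : IsShortExact (N.arrow ≫ p) (cokernel.π (N.arrow ≫ p)) := .cokernel_π _
  by_cases h₀ : IsZero (cokernel (N.arrow ≫ p))
  · have : Epi (N.arrow ≫ p) := Preadditive.epi_of_isZero_cokernel _ h₀
    have := isIso_of_mono_of_epi (N.arrow ≫ p)
    exact ⟨inv (N.arrow ≫ p) ≫ N.arrow, by rw [Category.assoc, IsIso.inv_hom_id]⟩
  · obtain ⟨Y, t, hY, hY₀, ht⟩ :=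
      h _ _ (hs.cokernel_desc hQ rfl) (hQ.acyclic_right hN.prop.1 hE) h₀
    exact (hY₀ (isZero_of_maximal_acyclic_mono hN (c := cokernel.π (N.arrow ≫ p))
      (cokernel.π_desc _ _ _) hY t)).elim

lemma exists_ext1Zero_of_acyclic_test : ∃ G : CochainComplex 𝒢 ℤ, ∀ I : CochainComplex 𝒢 ℤ,
    (∀ V : Subobject G, (cokernel V.arrow).Acyclic →
      ∀ f : (V : CochainComplex 𝒢 ℤ) ⟶ I, ∃ g, V.arrow ≫ g = f) →
    ∀ E : CochainComplex 𝒢 ℤ, E.Acyclic → Ext1Zero E I := by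
  obtain ⟨G, hG⟩ := exists_acyclic_image_lift (𝒢 := 𝒢)
  refine ⟨G, fun I hI _ => ext1Zero_of_exists_acyclic_lift fun M E i p hs hE hE₀ => ?_⟩
  have := hs.epi
  obtain ⟨Y, a, π, b, hY, hY₀, _, _, hab⟩ := hG hE hE₀ p
  have hK : IsShortExact (kernelSubobject π).arrow π :=
    .of_exists_lift (kernelSubobject_arrow_comp π) fun k hk =>
      ⟨factorThruKernelSubobject π k hk, factorThruKernelSubobject_comp_arrow π k hk⟩
  have hcok : (cokernel (kernelSubobject π).arrow).Acyclic := fun n =>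
    (hY n).of_iso (hK.nonempty_iso (.cokernel_π _) (.refl _) (Category.comp_id _)).some
  obtain ⟨t, ht⟩ := hs.exists_lift_of_exists_extension hK (hI _ hcok) hab
  exact ⟨Y, t, hY, hY₀, ht ▸ inferInstance⟩

lemma exists_isShortExact_ext1Zero_of_acyclic (X : CochainComplex 𝒢 ℤ) :
    ∃ (I P : CochainComplex 𝒢 ℤ) (i : X ⟶ I) (p : I ⟶ P), IsShortExact i p ∧ P.Acyclic ∧
      ∀ E : CochainComplex 𝒢 ℤ, E.Acyclic → Ext1Zero E I := by
  obtain ⟨G, hG⟩ := exists_ext1Zero_of_acyclic_test (𝒢 := 𝒢)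
  let W : MorphismProperty (CochainComplex 𝒢 ℤ) := .ofHoms
    fun V : {V : Subobject G // (cokernel V.arrow).Acyclic} => V.1.arrow
  have : MorphismProperty.IsSmall.{v} W := MorphismProperty.isSmall_ofHoms _
  obtain ⟨I, P, i, p, hs, hI, hP⟩ := exists_isShortExact_of_isSmall (W := W)
    (by rintro _ _ _ ⟨V⟩; exact inferInstanceAs (Mono V.1.arrow)) X
  refine ⟨I, P, i, p, hs, ?_, hG I fun V hV f => hI V.arrow (.mk (Subtype.mk V hV)) f⟩
  refine acyclic_of_ext1Zero_sphere fun m Q _ => hP _ ?_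
  rintro _ _ _ ⟨V⟩
  exact Ext1Zero.sphere_right_of_acyclic V.2 m Q

end AcyclicExtensions

/-! ### The approximation sequences -/

namespace IsCompleteCotorsionPair

variable {𝓐 𝓑 : Set 𝒢}

lemma ext1Zero_tilde (hpair : IsCompleteCotorsionPair 𝓐 𝓑) {U V : CochainComplex 𝒢 ℤ}
    (hU : U ∈ Tilde 𝓐) (hV : V ∈ Tilde 𝓑) : Ext1Zero U V :=
  .of_mem_tilde (fun _ hA _ hB => hpair.toIsCotorsionPair.ext1Zero hA hB) hU hV

variable [IsGrothendieckAbelian.{v} 𝒢] [HasExt.{w} 𝒢]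

lemma exists_tilde_right_cokernel_mem_leftPerp (hpair : IsCompleteCotorsionPair 𝓐 𝓑)
    (hher : IsHereditary 𝓐 𝓑) (X : CochainComplex 𝒢 ℤ) :
    ∃ (B P : CochainComplex 𝒢 ℤ) (i : X ⟶ B) (p : B ⟶ P),
      IsShortExact i p ∧ B ∈ Tilde 𝓑 ∧ P ∈ leftPerp (Tilde 𝓑) := by
  obtain ⟨E, P, i, p, hs, hE, hP⟩ := hpair.exists_isShortExact_acyclic X
  obtain ⟨B, A, b, a, hs', hB, hA⟩ := hpair.exists_tilde_right hher hE
  obtain ⟨Q, q, s, t, hQ, hPQA⟩ := hs.exists_comp_mono hs'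
  exact ⟨B, Q, i ≫ b, q, hQ, hB,
    fun V hV => .of_shortExact_left hPQA (hP V hV) (hpair.ext1Zero_tilde hA hV)⟩

lemma exists_tilde_right_kernel_mem_leftPerp (hpair : IsCompleteCotorsionPair 𝓐 𝓑)
    (hher : IsHereditary 𝓐 𝓑) (X : CochainComplex 𝒢 ℤ) :
    ∃ (B P : CochainComplex 𝒢 ℤ) (i : B ⟶ P) (p : P ⟶ X),
      IsShortExact i p ∧ B ∈ Tilde 𝓑 ∧ P ∈ leftPerp (Tilde 𝓑) := by
  obtain ⟨A, f, hf, hA⟩ := hpair.exists_epi_tilde X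
  obtain ⟨B, P, i, p, hs, hB, hP⟩ :=
    hpair.exists_tilde_right_cokernel_mem_leftPerp hher (kernel f)
  obtain ⟨P', b, x, p', a, hBP'X, hAP'P⟩ := (IsShortExact.kernel_ι f).exists_pushout hs
  exact ⟨B, P', b, x, hBP'X, hB,
    fun V hV => .of_shortExact_left hAP'P (hpair.ext1Zero_tilde hA hV) (hP V hV)⟩

lemma exists_rightPerp_cokernel_mem_tilde (hpair : IsCompleteCotorsionPair 𝓐 𝓑)
    (hher : IsHereditary 𝓐 𝓑) (X : CochainComplex 𝒢 ℤ) :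
    ∃ (F A : CochainComplex 𝒢 ℤ) (i : X ⟶ F) (p : F ⟶ A),
      IsShortExact i p ∧ A ∈ Tilde 𝓐 ∧ F ∈ rightPerp (Tilde 𝓐) := by
  obtain ⟨I, E, i, p, hs, hE, hI⟩ := exists_isShortExact_ext1Zero_of_acyclic X
  obtain ⟨B, A, b, a, hs', hB, hA⟩ := hpair.exists_tilde_left hher hE
  obtain ⟨F, x, f, b', e, hXFA, hBFI⟩ := hs.exists_pullback hs'
  exact ⟨F, A, x, f, hXFA, hA,
    fun U hU => .of_shortExact_right hBFI (hpair.ext1Zero_tilde hU hB) (hI U hU.1)⟩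

lemma exists_rightPerp_kernel_mem_tilde (hpair : IsCompleteCotorsionPair 𝓐 𝓑)
    (hher : IsHereditary 𝓐 𝓑) (X : CochainComplex 𝒢 ℤ) :
    ∃ (F A : CochainComplex 𝒢 ℤ) (i : F ⟶ A) (p : A ⟶ X),
      IsShortExact i p ∧ A ∈ Tilde 𝓐 ∧ F ∈ rightPerp (Tilde 𝓐) := by
  obtain ⟨A₀, f, hf, hA₀⟩ := hpair.exists_epi_tilde X
  obtain ⟨I, E, i, p, hs, hE, hI⟩ := exists_isShortExact_ext1Zero_of_acyclic (kernel f)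
  obtain ⟨M, j, x, e, a₀, hIMX, hA₀ME⟩ := (IsShortExact.kernel_ι f).exists_pushout hs
  obtain ⟨B, A, b, a, hs', hB, hA⟩ :=
    hpair.exists_tilde_left hher (hA₀ME.acyclic_mid (Tilde.acyclic hA₀) hE)
  obtain ⟨F, g, s, t, hFAX, hBFI⟩ := hIMX.exists_comp_epi hs'
  exact ⟨F, A, g, a ≫ x, hFAX, hA,
    fun U hU => .of_shortExact_right hBFI (hpair.ext1Zero_tilde hU hB) (hI U hU.1)⟩

end IsCompleteCotorsionPair

/-- Let `𝒢` be a Grothendieck abelian category (cocomplete abelian with exact filtered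
colimits and a separator) and `(𝓐, 𝓑)` a complete hereditary cotorsion pair in `𝒢`.
Then both induced pairs `(⊥(B̃), B̃)` and `(Ã, Ã^⊥)` in the category of cochain
complexes are complete cotorsion pairs: (i) every complex `X` admits short exact
sequences `0 → X → B_X → P_X → 0` and `0 → B^X → P^X → X → 0` with `B_X, B^X ∈ B̃` and
`Ext¹(P_X, V) = 0 = Ext¹(P^X, V)` for all `V ∈ B̃`; (ii) every complex `X` admits
short exact sequences `0 → X → F_X → A_X → 0` and `0 → F^X → A^X → X → 0` with
`A_X, A^X ∈ Ã` and `Ext¹(U, F_X) = 0 = Ext¹(U, F^X)` for all `U ∈ Ã`. -/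
theorem stmt_14 [HasColimits 𝒢] [HasFilteredColimits 𝒢] [AB5 𝒢] [HasSeparator 𝒢]
    [HasExt.{w} 𝒢] (𝓐 𝓑 : Set 𝒢)
    (hpair : IsCompleteCotorsionPair 𝓐 𝓑) (hher : IsHereditary 𝓐 𝓑) :
    ∀ X : CochainComplex 𝒢 ℤ,
      ((∃ (BX PX : CochainComplex 𝒢 ℤ) (i : X ⟶ BX) (p : BX ⟶ PX) (w : i ≫ p = 0),
          (ShortComplex.mk i p w).ShortExact ∧ BX ∈ Tilde 𝓑 ∧
          (∀ V ∈ Tilde 𝓑, Ext1Zero PX V)) ∧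
       (∃ (BX PX : CochainComplex 𝒢 ℤ) (i : BX ⟶ PX) (p : PX ⟶ X) (w : i ≫ p = 0),
          (ShortComplex.mk i p w).ShortExact ∧ BX ∈ Tilde 𝓑 ∧
          (∀ V ∈ Tilde 𝓑, Ext1Zero PX V))) ∧
      ((∃ (FX AX : CochainComplex 𝒢 ℤ) (i : X ⟶ FX) (p : FX ⟶ AX) (w : i ≫ p = 0),
          (ShortComplex.mk i p w).ShortExact ∧ AX ∈ Tilde 𝓐 ∧
          (∀ U ∈ Tilde 𝓐, Ext1Zero U FX)) ∧
       (∃ (FX AX : CochainComplex 𝒢 ℤ) (i : FX ⟶ AX) (p : AX ⟶ X) (w : i ≫ p = 0),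
          (ShortComplex.mk i p w).ShortExact ∧ AX ∈ Tilde 𝓐 ∧
          (∀ U ∈ Tilde 𝓐, Ext1Zero U FX))) := by
  have : IsGrothendieckAbelian.{v} 𝒢 :=
    { hasFilteredColimitsOfSize := inferInstance
      ab5OfSize := inferInstance
      hasSeparator := inferInstance }
  intro X
  obtain ⟨B, P, i, p, ⟨w, hs⟩, hB, hP⟩ := hpair.exists_tilde_right_cokernel_mem_leftPerp hher X
  obtain ⟨B', P', i', p', ⟨w', hs'⟩, hB', hP'⟩ :=
    hpair.exists_tilde_right_kernel_mem_leftPerp hher X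
  obtain ⟨F, A, j, q, ⟨z, ht⟩, hA, hF⟩ := hpair.exists_rightPerp_cokernel_mem_tilde hher X
  obtain ⟨F', A', j', q', ⟨z', ht'⟩, hA', hF'⟩ := hpair.exists_rightPerp_kernel_mem_tilde hher X
  exact ⟨⟨⟨B, P, i, p, w, hs, hB, hP⟩, ⟨B', P', i', p', w', hs', hB', hP'⟩⟩,
    ⟨⟨F, A, j, q, z, ht, hA, hF⟩, ⟨F', A', j', q', z', ht', hA', hF'⟩⟩⟩
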